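/- Let κ > 0 and let U ⊆ ℝ² be an open connected set whose complement K = ℝ² \ U is compact. Let θ ∈ ℝ² be a unit vector and let x₁, x₂ be two points lying on a common line with direction θ. Assume that the rays L⁺ = {x₁ + sθ : s > 0} and L⁻ = {x₂ − sθ : s > 0} are contained in U, and let Λ⁺ ⊆ L⁺ and Λ⁻ ⊆ L⁻ be nonempty open subintervals (nonempty relatively open subsets of the rays). If ψ₁ and ψ₂ are radiation solutions on U such that Im ψ₁(x) = Im ψ₂(x) for all x ∈ Λ⁺ ∪ Λ⁻, then ψ₁(x) = ψ₂(x) for all x ∈ L⁺ ∪ L⁻. -/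

import Mathlib

noncomputable section

open Real MeasureTheory Set

/-- The plane `ℝ²`. -/
abbrev R2 : Type := EuclideanSpace ℝ (Fin 2)

/-- The Laplacian of a complex-valued function on `ℝ²`, as the sum of the second
derivatives along the standard coordinate directions. -/
def laplacian2 (f : R2 → ℂ) (x : R2) : ℂ :=
  ∑ i : Fin 2,
    fderiv ℝ (fun y => fderiv ℝ f y (EuclideanSpace.single i 1)) x (EuclideanSpace.single i 1)

/-- `ψ` is a radiation solution of the Helmholtz equation `Δψ + κ²ψ = 0` on `U`:
it is `C²` on `U`, satisfies the Helmholtz equation on `U`, and satisfies the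
Sommerfeld radiation condition
`√|x| (∂ψ/∂|x| − iκψ)(x) → 0` as `|x| → ∞`, uniformly in `x/|x|`. -/
def IsRadiationSolution (κ : ℝ) (U : Set R2) (ψ : R2 → ℂ) : Prop :=
  ContDiffOn ℝ 2 ψ U ∧
  (∀ x ∈ U, laplacian2 ψ x + (κ : ℂ) ^ 2 * ψ x = 0) ∧
  ∀ ε > 0, ∃ R > 0, ∀ x ∈ U, R ≤ ‖x‖ →
    ‖(Real.sqrt ‖x‖ : ℂ) *
      (fderiv ℝ ψ x (‖x‖⁻¹ • x) - Complex.I * (κ : ℂ) * ψ x)‖ < ε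

/-!
A radiation solution on an exterior domain agrees far out with a globally `C²` radiating function
`u`, which is the convolution of its compactly supported source `(Δ + κ²) u` with the outgoing
fundamental solution. Along a ray the distance to a source point is, up to a bounded correction,
the ray parameter, so the formula extends `s ↦ ψ (p + s • θ)` from large `s` to a holomorphic
function `G` on a half-plane with `‖G z‖ ≤ C * exp (-κ * Im z)`. If `Im ψ` vanishes on an interval
of the ray, it vanishes on the whole ray by analyticity, so `G` is real on the real axis, and
Schwarz reflection improves the bound to `C * exp (-κ * |Im z|)`. By a Carlson type theorem such a
`G` is zero, and by analyticity so is `ψ` on the ray.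
-/

open Filter Topology
open scoped Laplacian

theorem hasDerivAt_setIntegral_of_continuousOn {𝕜 X E : Type*} [RCLike 𝕜]
    [TopologicalSpace X] [T2Space X] [MeasurableSpace X] [OpensMeasurableSpace X]
    {μ : Measure X} [IsFiniteMeasureOnCompacts μ]
    [NormedAddCommGroup E] [NormedSpace ℝ E] [NormedSpace 𝕜 E]
    {Ω : Set 𝕜} (hΩ : IsOpen Ω) {K : Set X} (hK : IsCompact K) {F F' : 𝕜 → X → E}
    (hF : ∀ z ∈ Ω, ContinuousOn (F z) K)
    (hF' : ContinuousOn (Function.uncurry F') (Ω ×ˢ K))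
    (hd : ∀ z ∈ Ω, ∀ y ∈ K, HasDerivAt (fun z => F z y) (F' z y) z) {z : 𝕜} (hz : z ∈ Ω) :
    HasDerivAt (fun z => ∫ y in K, F z y ∂μ) (∫ y in K, F' z y ∂μ) z := by
  obtain ⟨δ, hδ, hball⟩ := Metric.nhds_basis_closedBall.mem_iff.1 (hΩ.mem_nhds hz)
  have hF'z : ContinuousOn (F' z) K :=
    hF'.comp (Continuous.prodMk_right z).continuousOn fun y hy => ⟨hz, hy⟩
  obtain ⟨C, hC⟩ := ((isCompact_closedBall z δ).prod hK).exists_bound_of_continuousOn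
    (hF'.mono (prod_mono_left hball))
  refine (hasDerivAt_integral_of_dominated_loc_of_deriv_le (bound := fun _ => C)
    (Metric.closedBall_mem_nhds z hδ) ?_ ((hF z hz).integrableOn_compact hK)
    (hF'z.aestronglyMeasurable_of_isCompact hK hK.measurableSet)
    (ae_restrict_of_forall_mem hK.measurableSet fun y hy w hw => hC (w, y) ⟨hw, hy⟩)
    (integrableOn_const hK.measure_ne_top)
    (ae_restrict_of_forall_mem hK.measurableSet fun y hy w hw => hd w (hball hw) y hy)).2
  filter_upwards [hΩ.mem_nhds hz] with w hw
  exact (hF w hw).aestronglyMeasurable_of_isCompact hK hK.measurableSet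

/-! ### The outgoing Hankel function -/

/-- The integrand of the exponentially weighted moments
`∫ t^{2k} e^{-t²} (t² - 2iw)^a dt` from which the outgoing Hankel function is built. -/
def hankelIntegrand (a : ℝ) (k : ℕ) (w : ℂ) (t : ℝ) : ℂ :=
  ((t ^ (2 * k) * exp (-t ^ 2) : ℝ) : ℂ) * ((t : ℂ) ^ 2 - 2 * Complex.I * w) ^ (a : ℂ)

/-- The moments of the Gaussian against a power of `t² - 2iw`; the outgoing Hankel function is
`e^{iw}` times the moment with `a = -1/2` and `k = 0`. -/
def hankelMoment (a : ℝ) (k : ℕ) (w : ℂ) : ℂ :=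
  ∫ t : ℝ, hankelIntegrand a k w t

theorem sq_sub_mem_slitPlane (t : ℝ) {w : ℂ} (hw : 0 < w.re) :
    (t : ℂ) ^ 2 - 2 * Complex.I * w ∈ Complex.slitPlane := by
  refine Or.inr ?_
  simp [← Complex.ofReal_pow, hw.ne']

theorem norm_sq_sub_cpow_le {a : ℝ} (ha : a ≤ 0) (t : ℝ) {w : ℂ} (hw : 0 < w.re) :
    ‖((t : ℂ) ^ 2 - 2 * Complex.I * w) ^ (a : ℂ)‖ ≤ (2 * w.re) ^ a := by
  have hbase : 2 * w.re ≤ ‖(t : ℂ) ^ 2 - 2 * Complex.I * w‖ := by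
    refine le_trans (le_of_eq ?_) (Complex.abs_im_le_norm _)
    simp [← Complex.ofReal_pow, abs_of_pos hw]
  rw [Complex.norm_cpow_real]
  exact rpow_le_rpow_of_nonpos (by positivity) hbase ha

theorem continuous_sq_sub_cpow (a : ℝ) {w : ℂ} (hw : 0 < w.re) :
    Continuous fun t : ℝ => ((t : ℂ) ^ 2 - 2 * Complex.I * w) ^ (a : ℂ) :=
  Continuous.cpow (by fun_prop) continuous_const fun t => sq_sub_mem_slitPlane t hw

theorem integrable_even_pow_mul_exp_neg_sq (k : ℕ) :
    Integrable fun t : ℝ => t ^ (2 * k) * exp (-t ^ 2) := by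
  have hs : (-1 : ℝ) < (2 * k : ℕ) := neg_one_lt_zero.trans_le (Nat.cast_nonneg _)
  simpa only [rpow_natCast, neg_one_mul] using integrable_rpow_mul_exp_neg_mul_sq one_pos hs

theorem norm_hankelIntegrand (a : ℝ) (k : ℕ) (w : ℂ) (t : ℝ) :
    ‖hankelIntegrand a k w t‖ =
      t ^ (2 * k) * exp (-t ^ 2) * ‖((t : ℂ) ^ 2 - 2 * Complex.I * w) ^ (a : ℂ)‖ := by
  rw [hankelIntegrand, norm_mul, Complex.norm_of_nonneg]
  rw [pow_mul]
  positivity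

theorem norm_hankelIntegrand_le {a : ℝ} (ha : a ≤ 0) (k : ℕ) (t : ℝ) {w : ℂ} (hw : 0 < w.re) :
    ‖hankelIntegrand a k w t‖ ≤ t ^ (2 * k) * exp (-t ^ 2) * (2 * w.re) ^ a := by
  rw [norm_hankelIntegrand, pow_mul]
  gcongr
  exact norm_sq_sub_cpow_le ha t hw

theorem continuous_hankelIntegrand (a : ℝ) (k : ℕ) {w : ℂ} (hw : 0 < w.re) :
    Continuous (hankelIntegrand a k w) :=
  Continuous.mul (by fun_prop) (continuous_sq_sub_cpow a hw)

theorem integrable_hankelIntegrand {a : ℝ} (ha : a ≤ 0) (k : ℕ) {w : ℂ} (hw : 0 < w.re) :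
    Integrable (hankelIntegrand a k w) :=
  ((integrable_even_pow_mul_exp_neg_sq k).mul_const ((2 * w.re) ^ a)).mono'
    (continuous_hankelIntegrand a k hw).aestronglyMeasurable
    (ae_of_all _ fun t => norm_hankelIntegrand_le ha k t hw)

theorem norm_hankelMoment_le {a : ℝ} (ha : a ≤ 0) (k : ℕ) {w : ℂ} (hw : 0 < w.re) :
    ‖hankelMoment a k w‖ ≤ (∫ t : ℝ, t ^ (2 * k) * exp (-t ^ 2)) * (2 * w.re) ^ a := by
  rw [← integral_mul_const]
  exact norm_integral_le_of_norm_le ((integrable_even_pow_mul_exp_neg_sq k).mul_const _)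
    (ae_of_all _ fun t => norm_hankelIntegrand_le ha k t hw)

theorem hasDerivAt_hankelIntegrand (a : ℝ) (k : ℕ) (t : ℝ) {w : ℂ} (hw : 0 < w.re) :
    HasDerivAt (fun w => hankelIntegrand a k w t)
      (-2 * Complex.I * a * hankelIntegrand (a - 1) k w t) w := by
  have hbase : HasDerivAt (fun z : ℂ => (t : ℂ) ^ 2 - 2 * Complex.I * z) (-2 * Complex.I) w := by
    simpa using ((hasDerivAt_id w).const_mul (2 * Complex.I)).const_sub ((t : ℂ) ^ 2)
  refine ((hbase.cpow_const (c := (a : ℂ)) (sq_sub_mem_slitPlane t hw)).const_mul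
    ((t ^ (2 * k) * exp (-t ^ 2) : ℝ) : ℂ)).congr_deriv ?_
  rw [hankelIntegrand, Complex.ofReal_sub, Complex.ofReal_one]
  ring

theorem hasDerivAt_hankelMoment {a : ℝ} (ha : a ≤ 0) (k : ℕ) {w : ℂ} (hw : 0 < w.re) :
    HasDerivAt (hankelMoment a k) (-2 * Complex.I * a * hankelMoment (a - 1) k w) w := by
  have ha' : a - 1 ≤ 0 := by linarith
  have hnear : ∀ᶠ z in 𝓝 w, w.re / 2 < z.re :=
    Complex.continuous_re.continuousAt.eventually_const_lt (half_lt_self hw)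
  have hpos : ∀ {z : ℂ}, w.re / 2 < z.re → 0 < z.re := fun hz => (half_pos hw).trans hz
  have hbound (t : ℝ) (z : ℂ) (hz : w.re / 2 < z.re) :
      ‖-2 * Complex.I * a * hankelIntegrand (a - 1) k z t‖ ≤
        2 * |a| * (t ^ (2 * k) * exp (-t ^ 2) * w.re ^ (a - 1)) := by
    have hmono : (2 * z.re) ^ (a - 1) ≤ w.re ^ (a - 1) :=
      rpow_le_rpow_of_nonpos hw (by linarith) ha'
    have hnorm : ‖-2 * Complex.I * (a : ℂ)‖ = 2 * |a| := by simp
    rw [norm_mul, hnorm]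
    gcongr
    refine (norm_hankelIntegrand_le ha' k t (hpos hz)).trans ?_
    rw [pow_mul]
    gcongr
  have hderiv := (hasDerivAt_integral_of_dominated_loc_of_deriv_le (μ := volume) hnear
    (hnear.mono fun z hz => (integrable_hankelIntegrand ha k (hpos hz)).1)
    (integrable_hankelIntegrand ha k hw) ((integrable_hankelIntegrand ha' k hw).const_mul _).1
    (ae_of_all _ hbound) (((integrable_even_pow_mul_exp_neg_sq k).mul_const _).const_mul _)
    (ae_of_all _ fun t z hz => hasDerivAt_hankelIntegrand a k t (hpos hz))).2
  rw [integral_const_mul] at hderiv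
  exact hderiv

theorem hankelMoment_one_eq_add {w : ℂ} (hw : 0 < w.re) :
    hankelMoment (-3 / 2) 1 w =
      hankelMoment (-1 / 2) 0 w + 2 * Complex.I * w * hankelMoment (-3 / 2) 0 w := by
  have hpointwise (t : ℝ) : hankelIntegrand (-3 / 2) 1 w t =
      hankelIntegrand (-1 / 2) 0 w t + 2 * Complex.I * w * hankelIntegrand (-3 / 2) 0 w t := by
    have hexp : ((-1 / 2 : ℝ) : ℂ) = ((-3 / 2 : ℝ) : ℂ) + 1 := by norm_num
    simp only [hankelIntegrand]
    rw [hexp, Complex.cpow_add _ _ (Complex.slitPlane_ne_zero (sq_sub_mem_slitPlane t hw)),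
      Complex.cpow_one]
    push_cast
    ring
  simp only [hankelMoment, hpointwise]
  rw [integral_add (integrable_hankelIntegrand (by norm_num) 0 hw)
    ((integrable_hankelIntegrand (by norm_num) 0 hw).const_mul _), integral_const_mul]

theorem integrable_mul_exp_neg_sq_mul_cpow {w : ℂ} (hw : 0 < w.re) :
    Integrable fun t : ℝ => ((t * exp (-t ^ 2) : ℝ) : ℂ) *
      ((t : ℂ) ^ 2 - 2 * Complex.I * w) ^ ((-1 / 2 : ℝ) : ℂ) := by
  have hgauss : Integrable fun t : ℝ => t * exp (-t ^ 2) := by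
    simpa only [neg_one_mul] using integrable_mul_exp_neg_mul_sq one_pos
  exact hgauss.ofReal.mul_bdd (continuous_sq_sub_cpow _ hw).aestronglyMeasurable
    (ae_of_all _ fun t => norm_sq_sub_cpow_le (by norm_num) t hw)

theorem hankelMoment_one_eq_sub {w : ℂ} (hw : 0 < w.re) :
    hankelMoment (-3 / 2) 1 w = hankelMoment (-1 / 2) 0 w - 2 * hankelMoment (-1 / 2) 1 w := by
  have hQ (k : ℕ) := integrable_hankelIntegrand (a := -1 / 2) (by norm_num) k hw
  have hQ3 := integrable_hankelIntegrand (a := -3 / 2) (by norm_num) 1 hw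
  have hderiv (t : ℝ) : HasDerivAt (fun t : ℝ => ((t * exp (-t ^ 2) : ℝ) : ℂ) *
        ((t : ℂ) ^ 2 - 2 * Complex.I * w) ^ ((-1 / 2 : ℝ) : ℂ))
      (hankelIntegrand (-1 / 2) 0 w t - 2 * hankelIntegrand (-1 / 2) 1 w t -
        hankelIntegrand (-3 / 2) 1 w t) t := by
    have hweight : HasDerivAt (fun t : ℝ => t * exp (-t ^ 2))
        (exp (-t ^ 2) - 2 * t ^ 2 * exp (-t ^ 2)) t :=
      ((hasDerivAt_id' t).mul (hasDerivAt_pow 2 t).fun_neg.exp).congr_deriv (by push_cast; ring)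
    have hbase : HasDerivAt (fun z : ℂ => z ^ 2 - 2 * Complex.I * w) (2 * t : ℂ) t := by
      simpa using (hasDerivAt_pow 2 (t : ℂ)).sub_const (2 * Complex.I * w)
    have hexp : ((-1 / 2 : ℝ) : ℂ) - 1 = ((-3 / 2 : ℝ) : ℂ) := by norm_num
    refine (hweight.ofReal_comp.mul
      (hbase.cpow_const (sq_sub_mem_slitPlane t hw)).comp_ofReal).congr_deriv ?_
    simp only [hankelIntegrand]
    rw [hexp]
    push_cast
    ring
  have hparts := integral_eq_zero_of_hasDerivAt_of_integrable hderiv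
    (((hQ 0).sub ((hQ 1).const_mul 2)).sub hQ3) (integrable_mul_exp_neg_sq_mul_cpow hw)
  rw [integral_sub (by exact (hQ 0).sub ((hQ 1).const_mul 2)) hQ3,
    integral_sub (hQ 0) ((hQ 1).const_mul 2), integral_const_mul] at hparts
  exact (sub_eq_zero.1 hparts).symm

theorem hankelMoment_neg_half_one {w : ℂ} (hw : 0 < w.re) :
    hankelMoment (-1 / 2) 1 w = -(Complex.I * w * hankelMoment (-3 / 2) 0 w) := by
  linear_combination (hankelMoment_one_eq_sub hw - hankelMoment_one_eq_add hw) / 2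

theorem integral_sq_mul_exp_neg_sq_mul_inv_abs :
    ∫ t : ℝ, t ^ 2 * exp (-t ^ 2) * |t|⁻¹ = 1 := by
  have heven : (fun t : ℝ => t ^ 2 * exp (-t ^ 2) * |t|⁻¹) =
      fun t => |t| * exp (-1 * |t| ^ (2 : ℝ)) := by
    ext t
    rcases eq_or_ne t 0 with rfl | ht
    · simp
    · have := abs_ne_zero.2 ht
      rw [rpow_two, sq_abs, ← sq_abs]
      field_simp
  have hhalf : ∫ t in Ioi (0 : ℝ), t * exp (-1 * t ^ (2 : ℝ)) = 1 / 2 := by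
    simpa using integral_rpow_mul_exp_neg_mul_rpow (p := 2) (q := 1) (b := 1) (by norm_num)
      (by norm_num) (by norm_num)
  rw [heven, integral_comp_abs (f := fun t => t * exp (-1 * t ^ (2 : ℝ))), hhalf]
  norm_num

theorem norm_sq_sub_cpow_neg_half_le {t : ℝ} (ht : t ≠ 0) (x : ℝ) :
    ‖((t : ℂ) ^ 2 - 2 * Complex.I * x) ^ ((-1 / 2 : ℝ) : ℂ)‖ ≤ |t|⁻¹ := by
  have hbase : |t| ^ 2 ≤ ‖(t : ℂ) ^ 2 - 2 * Complex.I * x‖ := by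
    refine le_trans (le_of_eq ?_) (Complex.abs_re_le_norm _)
    simp [← Complex.ofReal_pow]
  rw [Complex.norm_cpow_real]
  refine (rpow_le_rpow_of_nonpos (by positivity) hbase (by norm_num)).trans (le_of_eq ?_)
  rw [← rpow_natCast, ← rpow_mul (abs_nonneg t), ← rpow_neg_one]
  norm_num

theorem tendsto_sq_sub_cpow_neg_half {t : ℝ} (ht : t ≠ 0) :
    Tendsto (fun x : ℝ => ((t : ℂ) ^ 2 - 2 * Complex.I * x) ^ ((-1 / 2 : ℝ) : ℂ)) (𝓝[>] 0)
      (𝓝 ((|t|⁻¹ : ℝ) : ℂ)) := by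
  have hlim : ((|t|⁻¹ : ℝ) : ℂ) =
      ((t : ℂ) ^ 2 - 2 * Complex.I * (0 : ℝ)) ^ ((-1 / 2 : ℝ) : ℂ) := by
    have hsq : (t : ℂ) ^ 2 = ((|t| ^ 2 : ℝ) : ℂ) := by rw [sq_abs, Complex.ofReal_pow]
    rw [Complex.ofReal_zero, mul_zero, sub_zero, hsq, ← Complex.ofReal_cpow (by positivity),
      ← rpow_natCast, ← rpow_mul (abs_nonneg t), ← rpow_neg_one]
    norm_num
  rw [hlim]
  refine (ContinuousAt.tendsto ?_).mono_left nhdsWithin_le_nhds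
  refine ContinuousAt.cpow (by fun_prop) continuousAt_const (Or.inl ?_)
  simpa [← Complex.ofReal_pow] using sq_pos_of_ne_zero ht

theorem tendsto_hankelMoment_neg_half_one :
    Tendsto (fun x : ℝ => hankelMoment (-1 / 2) 1 x) (𝓝[>] 0) (𝓝 1) := by
  have hintegrable : Integrable fun t : ℝ => t ^ 2 * exp (-t ^ 2) * |t|⁻¹ := by
    by_contra h
    simpa [integral_undef h] using integral_sq_mul_exp_neg_sq_mul_inv_abs
  have hlim : (1 : ℂ) = ∫ t : ℝ, ((t ^ 2 * exp (-t ^ 2) * |t|⁻¹ : ℝ) : ℂ) := by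
    rw [integral_complex_ofReal, integral_sq_mul_exp_neg_sq_mul_inv_abs, Complex.ofReal_one]
  rw [hlim]
  refine tendsto_integral_filter_of_dominated_convergence _ ?_
    (Eventually.of_forall fun x => ae_of_all _ fun t => ?_) hintegrable (ae_of_all _ fun t => ?_)
  · filter_upwards [self_mem_nhdsWithin] with x hx
    exact (continuous_hankelIntegrand _ _ (by exact hx)).aestronglyMeasurable
  · rcases eq_or_ne t 0 with rfl | ht
    · simp [hankelIntegrand]
    · rw [norm_hankelIntegrand, mul_one]
      gcongr
      exact norm_sq_sub_cpow_neg_half_le ht x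
  · rcases eq_or_ne t 0 with rfl | ht
    · simp [hankelIntegrand]
    · rw [Complex.ofReal_mul]
      exact (tendsto_sq_sub_cpow_neg_half ht).const_mul ((t ^ 2 * exp (-t ^ 2) : ℝ) : ℂ)

/-- The outgoing Hankel function of order zero, normalised as `(πi/2) H₀⁽¹⁾(w)`, so that
`outgoingHankel (κ * ‖x‖) / (2π)` is the outgoing fundamental solution of `-(Δ + κ²)` on the
plane. -/
def outgoingHankel (w : ℂ) : ℂ :=
  Complex.exp (Complex.I * w) * hankelMoment (-1 / 2) 0 w

/-- The flux `w * outgoingHankel' w` of the outgoing Hankel function through the circle of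
radius `w`. -/
def outgoingFlux (w : ℂ) : ℂ :=
  Complex.exp (Complex.I * w) *
    (Complex.I * w * hankelMoment (-1 / 2) 0 w - hankelMoment (-1 / 2) 1 w)

theorem hasDerivAt_cexp_I_mul (w : ℂ) :
    HasDerivAt (fun w => Complex.exp (Complex.I * w)) (Complex.exp (Complex.I * w) * Complex.I)
      w := by
  simpa using ((hasDerivAt_id w).const_mul Complex.I).cexp

theorem hasDerivAt_hankelMoment_neg_half_zero {w : ℂ} (hw : 0 < w.re) :
    HasDerivAt (hankelMoment (-1 / 2) 0) (-hankelMoment (-1 / 2) 1 w / w) w := by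
  have hw0 : w ≠ 0 := fun h => by simp [h] at hw
  refine (hasDerivAt_hankelMoment (by norm_num) 0 hw).congr_deriv ?_
  rw [hankelMoment_neg_half_one hw]
  norm_num
  field_simp

theorem hasDerivAt_outgoingHankel {w : ℂ} (hw : 0 < w.re) :
    HasDerivAt outgoingHankel (outgoingFlux w / w) w := by
  have hw0 : w ≠ 0 := fun h => by simp [h] at hw
  refine ((hasDerivAt_cexp_I_mul w).mul
    (hasDerivAt_hankelMoment_neg_half_zero hw)).congr_deriv ?_
  rw [outgoingFlux]
  field_simp
  ring

theorem hasDerivAt_outgoingFlux {w : ℂ} (hw : 0 < w.re) :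
    HasDerivAt outgoingFlux (-(w * outgoingHankel w)) w := by
  have hw0 : w ≠ 0 := fun h => by simp [h] at hw
  have hB : HasDerivAt (hankelMoment (-1 / 2) 1)
      (Complex.I * (hankelMoment (-1 / 2) 0 w - 2 * hankelMoment (-1 / 2) 1 w)) w := by
    refine (hasDerivAt_hankelMoment (by norm_num) 1 hw).congr_deriv ?_
    have hexp : (-1 / 2 : ℝ) - 1 = -3 / 2 := by norm_num
    rw [← hankelMoment_one_eq_sub hw, hexp]
    push_cast
    ring
  refine ((hasDerivAt_cexp_I_mul w).mul ((((hasDerivAt_id' w).const_mul Complex.I).mul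
    (hasDerivAt_hankelMoment_neg_half_zero hw)).sub hB)).congr_deriv ?_
  have hcancel : w * (-hankelMoment (-1 / 2) 1 w / w) = -hankelMoment (-1 / 2) 1 w :=
    mul_div_cancel₀ _ hw0
  simp only [Pi.mul_apply, Pi.sub_apply, outgoingHankel]
  linear_combination Complex.exp (Complex.I * w) * Complex.I * hcancel +
    Complex.exp (Complex.I * w) * hankelMoment (-1 / 2) 0 w * w * Complex.I_sq

theorem differentiableOn_outgoingHankel : DifferentiableOn ℂ outgoingHankel {w | 0 < w.re} :=
  fun _ hw => (hasDerivAt_outgoingHankel hw).differentiableAt.differentiableWithinAt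

theorem norm_cexp_I_mul (w : ℂ) : ‖Complex.exp (Complex.I * w)‖ = exp (-w.im) := by
  simp [Complex.norm_exp]

theorem exists_norm_outgoingHankel_le :
    ∃ C, 0 ≤ C ∧ ∀ w : ℂ, 0 < w.re →
      ‖outgoingHankel w‖ ≤ C * (2 * w.re) ^ (-1 / 2 : ℝ) * exp (-w.im) := by
  refine ⟨∫ t : ℝ, t ^ (2 * 0) * exp (-t ^ 2), integral_nonneg fun t => by simp [exp_nonneg],
    fun w hw => ?_⟩
  rw [outgoingHankel, norm_mul, norm_cexp_I_mul, mul_comm]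
  gcongr
  exact norm_hankelMoment_le (by norm_num) 0 hw

theorem exists_norm_outgoingFlux_sub_le :
    ∃ C, ∀ w : ℂ, 0 < w.re →
      ‖outgoingFlux w - Complex.I * w * outgoingHankel w‖ ≤
        C * (2 * w.re) ^ (-1 / 2 : ℝ) * exp (-w.im) := by
  refine ⟨∫ t : ℝ, t ^ (2 * 1) * exp (-t ^ 2), fun w hw => ?_⟩
  have hmoment : outgoingFlux w - Complex.I * w * outgoingHankel w =
      -(Complex.exp (Complex.I * w) * hankelMoment (-1 / 2) 1 w) := by
    rw [outgoingFlux, outgoingHankel]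
    ring
  rw [hmoment, norm_neg, norm_mul, norm_cexp_I_mul, mul_comm]
  gcongr
  exact norm_hankelMoment_le (by norm_num) 1 hw

theorem tendsto_mul_outgoingHankel :
    Tendsto (fun x : ℝ => (x : ℂ) * outgoingHankel x) (𝓝[>] 0) (𝓝 0) := by
  obtain ⟨C, hC, hbound⟩ := exists_norm_outgoingHankel_le
  have hsqrt : Tendsto (fun x : ℝ => C * √x) (𝓝[>] 0) (𝓝 0) := by
    have := (continuous_sqrt.const_mul C).tendsto (0 : ℝ) |>.mono_left
      (nhdsWithin_le_nhds (s := Ioi 0))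
    simpa using this
  refine squeeze_zero_norm' ?_ hsqrt
  filter_upwards [self_mem_nhdsWithin] with x (hx : 0 < x)
  have hle : (2 * x) ^ (-1 / 2 : ℝ) ≤ x ^ (-1 / 2 : ℝ) :=
    rpow_le_rpow_of_nonpos hx (by linarith) (by norm_num)
  have hsq : x * x ^ (-1 / 2 : ℝ) = √x := by
    rw [sqrt_eq_rpow, ← rpow_one_add' hx.le] <;> norm_num
  calc ‖(x : ℂ) * outgoingHankel x‖ ≤ x * (C * (2 * x) ^ (-1 / 2 : ℝ)) := by
        rw [norm_mul, Complex.norm_of_nonneg hx.le]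
        gcongr
        simpa using hbound x (by simpa using hx)
    _ ≤ x * (C * x ^ (-1 / 2 : ℝ)) := by gcongr
    _ = C * √x := by rw [← hsq]; ring

theorem tendsto_outgoingFlux :
    Tendsto (fun x : ℝ => outgoingFlux x) (𝓝[>] 0) (𝓝 (-1)) := by
  have hexp : Tendsto (fun x : ℝ => Complex.exp (Complex.I * x)) (𝓝[>] 0) (𝓝 1) := by
    have : Continuous fun x : ℝ => Complex.exp (Complex.I * x) := by fun_prop
    simpa using this.tendsto 0 |>.mono_left nhdsWithin_le_nhds
  have hlim := (tendsto_mul_outgoingHankel.const_mul Complex.I).sub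
    (hexp.mul tendsto_hankelMoment_neg_half_one)
  rw [mul_zero, zero_sub, one_mul] at hlim
  refine hlim.congr fun x => ?_
  rw [outgoingFlux, outgoingHankel]
  ring

/-! ### Integrals over circles -/

variable {F : Type*} [NormedAddCommGroup F] [NormedSpace ℝ F]

theorem hasDerivAt_intervalIntegral_of_continuous {G G' : ℝ → ℝ → F}
    (hG : Continuous (Function.uncurry G)) (hG' : Continuous (Function.uncurry G'))
    (hd : ∀ r φ, HasDerivAt (fun r => G r φ) (G' r φ) r) {a b : ℝ} (hab : a ≤ b) (r : ℝ) :
    HasDerivAt (fun r => ∫ φ in a..b, G r φ) (∫ φ in a..b, G' r φ) r := by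
  simp only [intervalIntegral.integral_of_le hab, ← integral_Icc_eq_integral_Ioc]
  exact hasDerivAt_setIntegral_of_continuousOn isOpen_univ isCompact_Icc
    (fun r _ => (hG.comp (Continuous.prodMk_right r)).continuousOn) hG'.continuousOn
    (fun r _ φ _ => hd r φ) (mem_univ r)

/-- The unit vector with polar angle `φ`. -/
def circleDir (φ : ℝ) : R2 := !₂[cos φ, sin φ]

/-- The unit tangent of the unit circle at `circleDir φ`, oriented anticlockwise. -/
def circleTangent (φ : ℝ) : R2 := !₂[-sin φ, cos φ]

theorem orthonormal_circleDir_circleTangent (φ : ℝ) :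
    Orthonormal ℝ ![circleDir φ, circleTangent φ] := by
  refine ⟨fun i => ?_, fun i j hij => ?_⟩
  · fin_cases i <;> simp [circleDir, circleTangent, EuclideanSpace.norm_eq]
  · fin_cases i <;> fin_cases j <;>
      simp_all [circleDir, circleTangent, EuclideanSpace.inner_eq_star_dotProduct, mul_comm]

/-- The orthonormal frame of the plane formed by the radial and the angular direction at polar
angle `φ`. -/
def circleFrame (φ : ℝ) : OrthonormalBasis (Fin 2) ℝ R2 :=
  (basisOfOrthonormalOfCardEqFinrank (orthonormal_circleDir_circleTangent φ)
    (by simp)).toOrthonormalBasis (by simpa using orthonormal_circleDir_circleTangent φ)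

@[simp]
theorem coe_circleFrame (φ : ℝ) : ⇑(circleFrame φ) = ![circleDir φ, circleTangent φ] := by
  simp [circleFrame]

theorem norm_circleDir (φ : ℝ) : ‖circleDir φ‖ = 1 :=
  (orthonormal_circleDir_circleTangent φ).1 0

theorem norm_smul_circleDir {r : ℝ} (hr : 0 ≤ r) (φ : ℝ) : ‖r • circleDir φ‖ = r := by
  rw [norm_smul, norm_circleDir, mul_one, norm_of_nonneg hr]

theorem norm_add_smul_circleDir_le (x : R2) {r : ℝ} (hr : 0 ≤ r) (φ : ℝ) :
    ‖x + r • circleDir φ‖ ≤ ‖x‖ + r :=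
  (norm_add_le _ _).trans_eq (by rw [norm_smul_circleDir hr])

theorem le_norm_add_smul_circleDir (x : R2) {r : ℝ} (hr : 0 ≤ r) (φ : ℝ) :
    r - ‖x‖ ≤ ‖x + r • circleDir φ‖ := by
  simpa [norm_smul_circleDir hr, add_comm] using norm_sub_le_norm_add (r • circleDir φ) x

theorem norm_circleTangent (φ : ℝ) : ‖circleTangent φ‖ = 1 :=
  (orthonormal_circleDir_circleTangent φ).1 1

theorem hasDerivAt_euclideanPlane {f g : ℝ → ℝ} {f' g' φ : ℝ} (hf : HasDerivAt f f' φ)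
    (hg : HasDerivAt g g' φ) : HasDerivAt (fun φ => (!₂[f φ, g φ] : R2)) !₂[f', g'] φ := by
  have hpair : HasDerivAt (fun φ => ![f φ, g φ]) ![f', g'] φ := by
    simpa [hasDerivAt_pi, Fin.forall_fin_two] using ⟨hf, hg⟩
  exact (PiLp.hasFDerivAt_toLp 2 _).comp_hasDerivAt φ hpair

theorem hasDerivAt_circleDir (φ : ℝ) : HasDerivAt circleDir (circleTangent φ) φ :=
  hasDerivAt_euclideanPlane (hasDerivAt_cos φ) (hasDerivAt_sin φ)

theorem hasDerivAt_circleTangent (φ : ℝ) : HasDerivAt circleTangent (-circleDir φ) φ := by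
  refine (hasDerivAt_euclideanPlane (hasDerivAt_sin φ).fun_neg (hasDerivAt_cos φ)).congr_deriv ?_
  ext i
  fin_cases i <;> simp [circleDir]

@[fun_prop]
theorem continuous_circleDir : Continuous circleDir :=
  continuous_iff_continuousAt.2 fun φ => (hasDerivAt_circleDir φ).continuousAt

@[fun_prop]
theorem continuous_circleTangent : Continuous circleTangent :=
  continuous_iff_continuousAt.2 fun φ => (hasDerivAt_circleTangent φ).continuousAt

theorem laplacian_eq_circleFrame (v : R2 → F) (y : R2) (φ : ℝ) :
    Δ v y = fderiv ℝ (fderiv ℝ v) y (circleDir φ) (circleDir φ) +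
      fderiv ℝ (fderiv ℝ v) y (circleTangent φ) (circleTangent φ) := by
  rw [InnerProductSpace.laplacian_eq_iteratedFDeriv_orthonormalBasis v (circleFrame φ)]
  simp [iteratedFDeriv_two_apply]

theorem laplacian2_eq_laplacian {v : R2 → ℂ} {y : R2} (hv : ContDiffAt ℝ 2 v y) :
    laplacian2 v y = Δ v y := by
  have hd : DifferentiableAt ℝ (fderiv ℝ v) y :=
    (hv.fderiv_right (m := 1) (by norm_num)).differentiableAt (by norm_num)
  rw [InnerProductSpace.laplacian_eq_iteratedFDeriv_orthonormalBasis v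
    (EuclideanSpace.basisFun (Fin 2) ℝ)]
  refine Finset.sum_congr rfl fun i _ => ?_
  rw [iteratedFDeriv_two_apply, fderiv_clm_apply hd (differentiableAt_const _)]
  simp

theorem continuous_laplacian {v : R2 → F} (hv : ContDiff ℝ 2 v) : Continuous (Δ v) := by
  rw [InnerProductSpace.laplacian_eq_iteratedFDeriv_stdOrthonormalBasis]
  have := hv.continuous_iteratedFDeriv le_rfl
  fun_prop

/-- The integral of `v` over the circle of radius `r` around `x` with respect to the polar angle,
that is, `2π` times the circular mean of `v`. -/
def circularIntegral (v : R2 → F) (x : R2) (r : ℝ) : F :=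
  ∫ φ in -π..π, v (x + r • circleDir φ)

/-- The integral of the radial derivative of `v` over the circle of radius `r` around `x` with
respect to the polar angle. -/
def radialDerivIntegral (v : R2 → F) (x : R2) (r : ℝ) : F :=
  ∫ φ in -π..π, fderiv ℝ v (x + r • circleDir φ) (circleDir φ)

theorem hasDerivAt_add_smul_circleDir (x : R2) (r φ : ℝ) :
    HasDerivAt (fun r : ℝ => x + r • circleDir φ) (circleDir φ) r := by
  simpa using ((hasDerivAt_id r).smul_const (circleDir φ)).const_add x

theorem hasDerivAt_circularIntegral {v : R2 → F} (hv : ContDiff ℝ 1 v) (x : R2) (r : ℝ) :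
    HasDerivAt (circularIntegral v x) (radialDerivIntegral v x r) r := by
  have := hv.continuous_fderiv one_ne_zero
  have hv₀ := hv.continuous
  refine hasDerivAt_intervalIntegral_of_continuous (G := fun r φ => v (x + r • circleDir φ))
    (G' := fun r φ => fderiv ℝ v (x + r • circleDir φ) (circleDir φ))
    (by fun_prop) (by fun_prop) (fun r φ => ?_) (by linarith [pi_pos]) r
  exact (hv.differentiable one_ne_zero _).hasFDerivAt.comp_hasDerivAt r
    (hasDerivAt_add_smul_circleDir x r φ)

theorem hasDerivAt_radialDerivIntegral {v : R2 → F} (hv : ContDiff ℝ 2 v) (x : R2) (r : ℝ) :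
    HasDerivAt (radialDerivIntegral v x) (∫ φ in -π..π,
      fderiv ℝ (fderiv ℝ v) (x + r • circleDir φ) (circleDir φ) (circleDir φ)) r := by
  have hv' : ContDiff ℝ 1 (fderiv ℝ v) := hv.fderiv_right (by norm_num)
  have := hv'.continuous_fderiv one_ne_zero
  have hv₁ := hv'.continuous
  refine hasDerivAt_intervalIntegral_of_continuous
    (G := fun r φ => fderiv ℝ v (x + r • circleDir φ) (circleDir φ))
    (G' := fun r φ => fderiv ℝ (fderiv ℝ v) (x + r • circleDir φ) (circleDir φ) (circleDir φ))
    (by fun_prop) (by fun_prop) (fun r φ => ?_) (by linarith [pi_pos]) r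
  have h := (hv'.differentiable one_ne_zero _).hasFDerivAt.comp_hasDerivAt r
    (hasDerivAt_add_smul_circleDir x r φ)
  simpa using h.clm_apply (hasDerivAt_const r (circleDir φ))

theorem hasDerivAt_add_const_smul_circleDir (x : R2) (r φ : ℝ) :
    HasDerivAt (fun φ => x + r • circleDir φ) (r • circleTangent φ) φ :=
  ((hasDerivAt_circleDir φ).const_smul r).const_add x

theorem hasDerivAt_fderiv_circleTangent {v : R2 → F} (hv : ContDiff ℝ 2 v) (x : R2) (r φ : ℝ) :
    HasDerivAt (fun φ => fderiv ℝ v (x + r • circleDir φ) (circleTangent φ))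
      (r • fderiv ℝ (fderiv ℝ v) (x + r • circleDir φ) (circleTangent φ) (circleTangent φ) -
        fderiv ℝ v (x + r • circleDir φ) (circleDir φ)) φ := by
  have hv' : ContDiff ℝ 1 (fderiv ℝ v) := hv.fderiv_right (by norm_num)
  have hfderiv := (hv'.differentiable one_ne_zero _).hasFDerivAt.comp_hasDerivAt φ
    (hasDerivAt_add_const_smul_circleDir x r φ)
  refine (hfderiv.clm_apply (hasDerivAt_circleTangent φ)).congr_deriv ?_
  simp [sub_eq_add_neg]

theorem hasDerivAt_mul_radialDerivIntegral [CompleteSpace F] {v : R2 → F} (hv : ContDiff ℝ 2 v)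
    (x : R2) (r : ℝ) :
    HasDerivAt (fun r => r • radialDerivIntegral v x r) (r • circularIntegral (Δ v) x r) r := by
  have hv' : ContDiff ℝ 1 (fderiv ℝ v) := hv.fderiv_right (by norm_num)
  have := hv'.continuous_fderiv one_ne_zero
  have hv₁ := hv'.continuous
  have hradial : IntervalIntegrable (fun φ => fderiv ℝ v (x + r • circleDir φ) (circleDir φ))
      volume (-π) π := Continuous.intervalIntegrable (by fun_prop) _ _
  have htangent : IntervalIntegrable (fun φ => r • fderiv ℝ (fderiv ℝ v) (x + r • circleDir φ)
      (circleTangent φ) (circleTangent φ)) volume (-π) π :=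
    Continuous.intervalIntegrable (by fun_prop) _ _
  have hperiodic : ∫ φ in -π..π,
      (r • fderiv ℝ (fderiv ℝ v) (x + r • circleDir φ) (circleTangent φ) (circleTangent φ) -
        fderiv ℝ v (x + r • circleDir φ) (circleDir φ)) = 0 := by
    rw [intervalIntegral.integral_eq_sub_of_hasDerivAt
      (fun φ _ => hasDerivAt_fderiv_circleTangent hv x r φ) (htangent.sub hradial)]
    simp [circleDir, circleTangent]
  rw [intervalIntegral.integral_sub htangent hradial, sub_eq_zero,
    intervalIntegral.integral_smul] at hperiodic
  refine ((hasDerivAt_id' r).smul (hasDerivAt_radialDerivIntegral hv x r)).congr_deriv ?_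
  rw [one_smul, radialDerivIntegral, ← hperiodic, ← smul_add, circularIntegral,
    ← intervalIntegral.integral_add (Continuous.intervalIntegrable (by fun_prop) _ _)
      (Continuous.intervalIntegrable (by fun_prop) _ _)]
  exact congrArg (r • ·) (intervalIntegral.integral_congr fun φ _ =>
    (laplacian_eq_circleFrame v _ φ).symm)

theorem integrableOn_smul_comp_polarCoord_symm {f : ℂ → F} (hf : Integrable f) :
    IntegrableOn (fun p : ℝ × ℝ => p.1 • f (Complex.polarCoord.symm p)) polarCoord.target := by
  have hf' : IntegrableOn (f ∘ Complex.measurableEquivRealProd.symm)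
      (polarCoord.symm '' polarCoord.target) :=
    ((Complex.volume_preserving_equiv_real_prod.symm).integrable_comp_of_integrable
      hf).integrableOn
  refine ((integrableOn_image_iff_integrableOn_abs_det_fderiv_smul volume
    polarCoord.open_target.measurableSet
    (fun p _ => (hasFDerivAt_polarCoord_symm p).hasFDerivWithinAt)
    polarCoord.symm.injOn _).1 hf').congr_fun (fun p hp => ?_) polarCoord.open_target.measurableSet
  simp only [det_fderivPolarCoordSymm, abs_of_pos (show 0 < p.1 from hp.1), Function.comp_apply,
    Complex.measurableEquivRealProd_symm_polarCoord_symm_apply]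

theorem repr_polarCoord_symm (p : ℝ × ℝ) :
    Complex.orthonormalBasisOneI.repr (Complex.polarCoord.symm p) = p.1 • circleDir p.2 := by
  ext i
  fin_cases i <;> simp [circleDir, Complex.cos_ofReal_re, Complex.sin_ofReal_re]

theorem measurePreserving_add_repr (x : R2) :
    MeasurePreserving fun z : ℂ => x + Complex.orthonormalBasisOneI.repr z :=
  (measurePreserving_add_left volume x).comp Complex.orthonormalBasisOneI.measurePreserving_repr

theorem smul_circularIntegral (G : R2 → F) (x : R2) (r : ℝ) :
    r • circularIntegral G x r = ∫ φ in Ioo (-π) π,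
      r • G (x + Complex.orthonormalBasisOneI.repr (Complex.polarCoord.symm (r, φ))) := by
  simp only [repr_polarCoord_symm]
  rw [circularIntegral, ← intervalIntegral.integral_smul,
    intervalIntegral.integral_of_le (by linarith [pi_pos]), integral_Ioc_eq_integral_Ioo]

theorem integrable_prod_smul_comp_polarCoord_symm {G : R2 → F} (hG : Integrable G) (x : R2) :
    Integrable (fun p : ℝ × ℝ =>
      p.1 • G (x + Complex.orthonormalBasisOneI.repr (Complex.polarCoord.symm p)))
      ((volume.restrict (Ioi 0)).prod (volume.restrict (Ioo (-π) π))) := by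
  rw [Measure.prod_restrict]
  exact integrableOn_smul_comp_polarCoord_symm
    ((measurePreserving_add_repr x).integrable_comp_of_integrable hG)

theorem integrableOn_Ioi_smul_circularIntegral {G : R2 → F} (hG : Integrable G) (x : R2) :
    IntegrableOn (fun r => r • circularIntegral G x r) (Ioi 0) := by
  simp only [smul_circularIntegral]
  exact (integrable_prod_smul_comp_polarCoord_symm hG x).integral_prod_left

theorem integral_eq_integral_Ioi_smul_circularIntegral {G : R2 → F} (hG : Integrable G) (x : R2) :
    ∫ y, G y = ∫ r in Ioi 0, r • circularIntegral G x r := by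
  simp only [smul_circularIntegral]
  rw [← integral_prod _ (integrable_prod_smul_comp_polarCoord_symm hG x), Measure.prod_restrict,
    ← (measurePreserving_add_repr x).integral_comp
      ((MeasurableEquiv.addLeft x).measurableEmbedding.comp
        Complex.orthonormalBasisOneI.repr.toHomeomorph.measurableEmbedding),
    ← Complex.integral_comp_polarCoord_symm]
  rfl

/-! ### The Sommerfeld condition -/

/-- The quantity `∂u/∂|y| - iκu` that the Sommerfeld radiation condition requires to be small. -/
def sommerfeldDefect (κ : ℝ) (u : R2 → ℂ) (y : R2) : ℂ :=
  fderiv ℝ u y (‖y‖⁻¹ • y) - Complex.I * κ * u y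

/-- The Sommerfeld radiation condition for a function on the whole plane. -/
def IsRadiating (κ : ℝ) (u : R2 → ℂ) : Prop :=
  sommerfeldDefect κ u =o[Bornology.cobounded R2] fun y => ‖y‖ ^ (-1 / 2 : ℝ)

theorem norm_le_add_mul_rpow_of_norm_deriv_le {g g' : ℝ → F} {a b c M : ℝ} (ha : 0 < a)
    (hab : a ≤ b) (hc : 0 ≤ c) (hg : ∀ r ∈ Icc a b, HasDerivAt g (g' r) r)
    (hg' : ∀ r ∈ Icc a b, ‖g' r‖ ≤ c * r ^ (-1 / 2 : ℝ)) (hM : ‖g a‖ ≤ M) :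
    ‖g b‖ ≤ M + 2 * c * b ^ (1 / 2 : ℝ) := by
  have hB : ∀ r ∈ Icc a b, HasDerivAt (fun r : ℝ => M + 2 * c * r ^ (1 / 2 : ℝ))
      (c * r ^ (-1 / 2 : ℝ)) r := fun r hr => by
    refine (((hasDerivAt_rpow_const (Or.inl (ha.trans_le hr.1).ne')).const_mul (2 * c)).const_add
      M).congr_deriv ?_
    norm_num
    ring
  have ha' : 0 ≤ 2 * c * a ^ (1 / 2 : ℝ) := by positivity
  exact image_norm_le_of_norm_deriv_right_le_deriv_boundary'
    (fun r hr => (hg r hr).continuousAt.continuousWithinAt)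
    (fun r hr => (hg r (Ico_subset_Icc_self hr)).hasDerivWithinAt) (by linarith)
    (fun r hr => (hB r hr).continuousAt.continuousWithinAt)
    (fun r hr => (hB r (Ico_subset_Icc_self hr)).hasDerivWithinAt)
    (fun r hr => hg' r (Ico_subset_Icc_self hr)) (right_mem_Icc.2 hab)

theorem hasDerivAt_exp_mul_comp_smul (κ : ℝ) {u : R2 → ℂ} (hu : Differentiable ℝ u) {ω : R2}
    (hω : ‖ω‖ = 1) {r : ℝ} (hr : 0 < r) :
    HasDerivAt (fun r : ℝ => Complex.exp (-(Complex.I * κ * r)) * u (r • ω))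
      (Complex.exp (-(Complex.I * κ * r)) * sommerfeldDefect κ u (r • ω)) r := by
  have hray : HasDerivAt (fun r : ℝ => u (r • ω)) (fderiv ℝ u (r • ω) ω) r :=
    (hu (r • ω)).hasFDerivAt.comp_hasDerivAt r (by simpa using (hasDerivAt_id r).smul_const ω)
  have hphase : HasDerivAt (fun r : ℝ => -(Complex.I * κ * (r : ℂ))) (-(Complex.I * κ)) r := by
    simpa using ((hasDerivAt_id r).ofReal_comp.const_mul (Complex.I * κ)).fun_neg
  refine (hphase.cexp.mul hray).congr_deriv ?_
  rw [sommerfeldDefect, norm_smul, hω, mul_one, norm_of_nonneg hr.le, inv_smul_smul₀ hr.ne']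
  ring

theorem norm_exp_neg_I_mul_ofReal (κ r : ℝ) : ‖Complex.exp (-(Complex.I * κ * r))‖ = 1 := by
  simp [Complex.norm_exp]

theorem IsRadiating.isLittleO_rpow {κ : ℝ} {u : R2 → ℂ} (hu : Differentiable ℝ u)
    (h : IsRadiating κ u) : u =o[Bornology.cobounded R2] fun y => ‖y‖ ^ (1 / 2 : ℝ) := by
  refine Asymptotics.isLittleO_iff.2 fun ε hε => ?_
  obtain ⟨R, hR0, hR⟩ : ∃ R > 0, ∀ y : R2, R ≤ ‖y‖ →
      ‖sommerfeldDefect κ u y‖ ≤ ε / 4 * ‖y‖ ^ (-1 / 2 : ℝ) := by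
    obtain ⟨R, -, hR⟩ := hasBasis_cobounded_norm.eventually_iff.1
      (Asymptotics.isLittleO_iff.1 h (by positivity : 0 < ε / 4))
    refine ⟨max R 1, by positivity, fun y hy => ?_⟩
    simpa [abs_of_nonneg (rpow_nonneg (norm_nonneg y) _)] using hR ((le_max_left _ _).trans hy)
  obtain ⟨M, hM⟩ := (isCompact_sphere (0 : R2) R).exists_bound_of_continuousOn
    hu.continuous.continuousOn
  have hlarge : ∀ᶠ y in Bornology.cobounded R2, M ≤ ε / 2 * ‖y‖ ^ (1 / 2 : ℝ) :=
    (((tendsto_rpow_atTop one_half_pos).comp tendsto_norm_cobounded_atTop).const_mul_atTop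
      (half_pos hε)).eventually_ge_atTop M
  filter_upwards [hlarge, tendsto_norm_cobounded_atTop.eventually_ge_atTop R] with y hyM hyR
  have hy0 : 0 < ‖y‖ := hR0.trans_le hyR
  have hω : ‖‖y‖⁻¹ • y‖ = 1 := norm_smul_inv_norm (𝕜 := ℝ) (norm_pos_iff.1 hy0)
  have hnorm : ∀ r : ℝ, R ≤ r → ‖r • ‖y‖⁻¹ • y‖ = r := fun r hr => by
    rw [norm_smul, hω, mul_one, norm_of_nonneg (hR0.le.trans hr)]
  have hbound := norm_le_add_mul_rpow_of_norm_deriv_le (M := M) hR0 hyR (by positivity : 0 ≤ ε / 4)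
    (fun r hr => hasDerivAt_exp_mul_comp_smul κ hu hω (hR0.trans_le hr.1))
    (fun r hr => by
      rw [norm_mul, norm_exp_neg_I_mul_ofReal, one_mul]
      exact (hR _ (by rw [hnorm r hr.1]; exact hr.1)).trans_eq (by rw [hnorm r hr.1]))
    (by
      rw [norm_mul, norm_exp_neg_I_mul_ofReal, one_mul]
      exact hM _ (by simpa using hnorm R le_rfl))
  rw [norm_mul, norm_exp_neg_I_mul_ofReal, one_mul, smul_inv_smul₀ hy0.ne'] at hbound
  rw [norm_of_nonneg (by positivity)]
  linarith

theorem eventually_norm_add_smul_circleDir_le {E : Type*} [NormedAddCommGroup E] {g : R2 → E}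
    {s : ℝ} (hg : g =o[Bornology.cobounded R2] fun y => ‖y‖ ^ s) (x : R2) {c : ℝ} (hc : 0 < c) :
    ∀ᶠ r in atTop, ∀ φ, ‖g (x + r • circleDir φ)‖ ≤ c * r ^ s := by
  obtain ⟨R, -, hR⟩ := hasBasis_cobounded_norm.eventually_iff.1
    (Asymptotics.isLittleO_iff.1 hg (by positivity : 0 < c / 2 ^ |s|))
  filter_upwards [eventually_gt_atTop 0, eventually_ge_atTop (2 * ‖x‖),
    eventually_ge_atTop (R + ‖x‖)] with r hr hrx hrR φ
  have hlower := le_norm_add_smul_circleDir x hr.le φ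
  have hupper := norm_add_smul_circleDir_le x hr.le φ
  generalize x + r • circleDir φ = y at hlower hupper
  have hpow : ‖y‖ ^ s ≤ 2 ^ |s| * r ^ s := by
    rcases le_total 0 s with hs | hs
    · rw [abs_of_nonneg hs, ← mul_rpow zero_le_two hr.le]
      exact rpow_le_rpow (norm_nonneg y) (by linarith) hs
    · rw [abs_of_nonpos hs, rpow_neg zero_le_two, ← inv_rpow zero_le_two,
        ← mul_rpow (by norm_num) hr.le]
      exact rpow_le_rpow_of_nonpos (by positivity) (by linarith) hs
  calc ‖g y‖ ≤ c / 2 ^ |s| * ‖y‖ ^ s := by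
        simpa [abs_of_nonneg (rpow_nonneg (norm_nonneg y) s)] using hR (by linarith : R ≤ ‖y‖)
    _ ≤ c / 2 ^ |s| * (2 ^ |s| * r ^ s) := by gcongr
    _ = c * r ^ s := by field_simp

theorem hasDerivAt_comp_add_smul_circleDir {v : R2 → F} (hv : Differentiable ℝ v) (x : R2)
    (r φ : ℝ) : HasDerivAt (fun φ => v (x + r • circleDir φ))
      (r • fderiv ℝ v (x + r • circleDir φ) (circleTangent φ)) φ := by
  simpa [Function.comp_def] using (hv _).hasFDerivAt.comp_hasDerivAt φ
    (hasDerivAt_add_const_smul_circleDir x r φ)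

theorem abs_inner_circleDir_le (x : R2) (φ : ℝ) : |inner ℝ x (circleDir φ)| ≤ ‖x‖ := by
  simpa [norm_circleDir] using abs_real_inner_le_norm x (circleDir φ)

theorem add_inner_circleDir_pos {x : R2} {r : ℝ} (hr : ‖x‖ < r) (φ : ℝ) :
    0 < r + inner ℝ x (circleDir φ) := by
  linarith [neg_le_of_abs_le (abs_inner_circleDir_le x φ)]

theorem abs_inner_circleTangent_le (x : R2) (φ : ℝ) : |inner ℝ x (circleTangent φ)| ≤ ‖x‖ := by
  simpa [norm_circleTangent] using abs_real_inner_le_norm x (circleTangent φ)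

/-- The slope of `y = x + r • circleDir φ` in the frame `circleFrame φ`, that is, the tangent of the
angle between `y` and the radial direction of the circle around `x` through `y`. -/
def recenteringSlope (x : R2) (r φ : ℝ) : ℝ :=
  inner ℝ x (circleTangent φ) / (r + inner ℝ x (circleDir φ))

theorem hasDerivAt_recenteringSlope {x : R2} {r : ℝ} (hr : ‖x‖ < r) (φ : ℝ) :
    HasDerivAt (recenteringSlope x r)
      (-(inner ℝ x (circleDir φ) / (r + inner ℝ x (circleDir φ)) +
        recenteringSlope x r φ ^ 2)) φ := by
  have hp := (add_inner_circleDir_pos hr φ).ne'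
  have hdir : HasDerivAt (fun φ => inner ℝ x (circleDir φ)) (inner ℝ x (circleTangent φ)) φ := by
    simpa using (hasDerivAt_const φ x).inner ℝ (hasDerivAt_circleDir φ)
  have htangent :
      HasDerivAt (fun φ => inner ℝ x (circleTangent φ)) (-inner ℝ x (circleDir φ)) φ := by
    simpa using (hasDerivAt_const φ x).inner ℝ (hasDerivAt_circleTangent φ)
  refine (htangent.div (hdir.const_add r) hp).congr_deriv ?_
  simp only [recenteringSlope]
  field_simp
  ring

theorem add_smul_circleDir_eq (x : R2) (r φ : ℝ) :
    x + r • circleDir φ = (r + inner ℝ x (circleDir φ)) • circleDir φ +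
      inner ℝ x (circleTangent φ) • circleTangent φ := by
  conv_lhs => rw [← (circleFrame φ).sum_repr' x]
  simp only [Fin.sum_univ_two, coe_circleFrame, Matrix.cons_val_zero, Matrix.cons_val_one,
    real_inner_comm x]
  module

theorem norm_add_smul_circleDir_pos {x : R2} {r : ℝ} (hr : ‖x‖ < r) (φ : ℝ) :
    0 < ‖x + r • circleDir φ‖ := by
  linarith [le_norm_add_smul_circleDir x ((norm_nonneg x).trans hr.le) φ]

theorem fderiv_circleDir_eq (v : R2 → F) {x : R2} {r : ℝ} (hr : ‖x‖ < r) (φ : ℝ) :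
    fderiv ℝ v (x + r • circleDir φ) (circleDir φ) =
      (‖x + r • circleDir φ‖ / (r + inner ℝ x (circleDir φ))) •
        fderiv ℝ v (x + r • circleDir φ) (‖x + r • circleDir φ‖⁻¹ • (x + r • circleDir φ)) -
      recenteringSlope x r φ • fderiv ℝ v (x + r • circleDir φ) (circleTangent φ) := by
  have hp := add_inner_circleDir_pos hr φ
  have hy := norm_add_smul_circleDir_pos hr φ
  generalize fderiv ℝ v (x + r • circleDir φ) = D
  have hframe : D (x + r • circleDir φ) = (r + inner ℝ x (circleDir φ)) • D (circleDir φ) +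
      inner ℝ x (circleTangent φ) • D (circleTangent φ) := by
    rw [add_smul_circleDir_eq, map_add, map_smul, map_smul]
  rw [map_smul, hframe, recenteringSlope]
  match_scalars <;> field_simp
  ring

/-- The coefficient of `u` when the Sommerfeld defect of `u` with respect to the centre `x` is
expressed through the one with respect to the origin and an angular derivative. -/
def recenteringCoeff (κ : ℝ) (x : R2) (r φ : ℝ) : ℂ :=
  Complex.I * κ * (‖x + r • circleDir φ‖ / (r + inner ℝ x (circleDir φ)) - 1 : ℝ) -
    ((inner ℝ x (circleDir φ) / (r + inner ℝ x (circleDir φ)) + recenteringSlope x r φ ^ 2) / r : ℝ)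

theorem hasDerivAt_recenteringSlope_div_mul {κ : ℝ} {u : R2 → ℂ} (hu : Differentiable ℝ u) {x : R2}
    {r : ℝ} (hr : ‖x‖ < r) (φ : ℝ) :
    HasDerivAt (fun φ => (recenteringSlope x r φ / r : ℝ) * u (x + r • circleDir φ))
      ((‖x + r • circleDir φ‖ / (r + inner ℝ x (circleDir φ)) : ℝ) *
          sommerfeldDefect κ u (x + r • circleDir φ) +
        recenteringCoeff κ x r φ * u (x + r • circleDir φ) -
        (fderiv ℝ u (x + r • circleDir φ) (circleDir φ) -
          Complex.I * κ * u (x + r • circleDir φ))) φ := by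
  have hr0 : (r : ℂ) ≠ 0 := by exact_mod_cast ((norm_nonneg x).trans_lt hr).ne'
  refine (((hasDerivAt_recenteringSlope hr φ).div_const r).ofReal_comp.mul
    (hasDerivAt_comp_add_smul_circleDir hu x r φ)).congr_deriv ?_
  rw [fderiv_circleDir_eq u hr, sommerfeldDefect, recenteringCoeff]
  simp only [Complex.real_smul]
  push_cast
  field_simp
  ring

theorem norm_recenteringCoeff_le {κ : ℝ} (hκ : 0 ≤ κ) {x : R2} {r : ℝ} (hr0 : 0 < r)
    (hr : 2 * ‖x‖ ≤ r) (φ : ℝ) : ‖recenteringCoeff κ x r φ‖ ≤ (4 * κ * ‖x‖ + 2) / r := by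
  have hupper := norm_add_smul_circleDir_le x hr0.le φ
  have hlower := le_norm_add_smul_circleDir x hr0.le φ
  have hradial := abs_le.1 (abs_inner_circleDir_le x φ)
  have hangular := abs_inner_circleTangent_le x φ
  rw [recenteringCoeff, recenteringSlope]
  set p := r + inner ℝ x (circleDir φ)
  have : r / 2 ≤ p := by linarith
  have hp0 : 0 < p := by linarith
  have hstretch : |‖x + r • circleDir φ‖ / p - 1| ≤ 4 * ‖x‖ / r := by
    rw [div_sub_one hp0.ne', abs_div, abs_of_pos hp0, div_le_div_iff₀ hp0 hr0]
    have : |‖x + r • circleDir φ‖ - p| ≤ 2 * ‖x‖ := abs_le.2 ⟨by linarith, by linarith⟩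
    nlinarith [norm_nonneg x]
  have hcos : |inner ℝ x (circleDir φ) / p| ≤ 1 := by
    rw [abs_div, abs_of_pos hp0, div_le_one hp0]
    exact abs_le.2 ⟨by linarith, by linarith⟩
  have hsin : (inner ℝ x (circleTangent φ) / p) ^ 2 ≤ 1 := by
    rw [sq_le_one_iff_abs_le_one, abs_div, abs_of_pos hp0, div_le_one hp0]
    linarith
  have hrate : |inner ℝ x (circleDir φ) / p + (inner ℝ x (circleTangent φ) / p) ^ 2| ≤ 1 + 1 :=
    (abs_add_le _ _).trans (add_le_add hcos (by rwa [abs_of_nonneg (sq_nonneg _)]))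
  refine (norm_sub_le _ _).trans ?_
  rw [norm_mul, norm_mul, Complex.norm_I, one_mul, Complex.norm_real, Complex.norm_real,
    Complex.norm_real, norm_of_nonneg hκ, norm_eq_abs, norm_eq_abs, abs_div _ r, abs_of_pos hr0]
  calc _ ≤ κ * (4 * ‖x‖ / r) + (1 + 1) / r := by gcongr
    _ = _ := by ring

theorem radialDerivIntegral_sub_eq {κ : ℝ} {u : R2 → ℂ} (hu : ContDiff ℝ 1 u) {x : R2} {r : ℝ}
    (hr : ‖x‖ < r) :
    radialDerivIntegral u x r - Complex.I * κ * circularIntegral u x r = ∫ φ in -π..π,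
      ((‖x + r • circleDir φ‖ / (r + inner ℝ x (circleDir φ)) : ℝ) *
          sommerfeldDefect κ u (x + r • circleDir φ) +
        recenteringCoeff κ x r φ * u (x + r • circleDir φ)) := by
  have hp := fun φ => (add_inner_circleDir_pos hr φ).ne'
  have hy := fun φ => (norm_add_smul_circleDir_pos hr φ).ne'
  have hu₀ := hu.continuous
  have := hu.continuous_fderiv one_ne_zero
  have hslope : Continuous (recenteringSlope x r) :=
    continuous_iff_continuousAt.2 fun φ => (hasDerivAt_recenteringSlope hr φ).continuousAt
  have hleft : Continuous fun φ => fderiv ℝ u (x + r • circleDir φ) (circleDir φ) -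
      Complex.I * κ * u (x + r • circleDir φ) := by fun_prop
  have hright : Continuous fun φ =>
      (‖x + r • circleDir φ‖ / (r + inner ℝ x (circleDir φ)) : ℝ) *
          sommerfeldDefect κ u (x + r • circleDir φ) +
        recenteringCoeff κ x r φ * u (x + r • circleDir φ) := by
    simp only [sommerfeldDefect, recenteringCoeff]
    fun_prop (disch := assumption)
  have hperiodic := intervalIntegral.integral_eq_sub_of_hasDerivAt
    (fun φ _ => hasDerivAt_recenteringSlope_div_mul (hu.differentiable one_ne_zero) hr φ)
    ((hright.sub hleft).intervalIntegrable (-π) π)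
  rw [intervalIntegral.integral_sub (hright.intervalIntegrable _ _)
    (hleft.intervalIntegrable _ _)] at hperiodic
  rw [show circleDir (-π) = circleDir π by simp [circleDir],
    show recenteringSlope x r (-π) = recenteringSlope x r π by
      simp [recenteringSlope, circleDir, circleTangent], sub_self, sub_eq_zero] at hperiodic
  rw [hperiodic, intervalIntegral.integral_sub, intervalIntegral.integral_const_mul]
  · rfl
  all_goals exact Continuous.intervalIntegrable (by fun_prop) _ _

theorem IsRadiating.isLittleO_circularIntegral {κ : ℝ} {u : R2 → ℂ} (hu : Differentiable ℝ u)
    (h : IsRadiating κ u) (x : R2) :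
    circularIntegral u x =o[atTop] fun r => r ^ (1 / 2 : ℝ) := by
  refine Asymptotics.isLittleO_iff.2 fun ε hε => ?_
  filter_upwards [eventually_norm_add_smul_circleDir_le (h.isLittleO_rpow hu) x
    (by positivity : 0 < ε / (2 * π)), eventually_gt_atTop 0] with r hr hr0
  refine (intervalIntegral.norm_integral_le_of_norm_le_const fun φ _ => hr φ).trans_eq ?_
  rw [norm_of_nonneg (by positivity), abs_of_pos (by linarith [pi_pos])]
  field_simp
  ring

theorem IsRadiating.isLittleO_radialDerivIntegral_sub {κ : ℝ} (hκ : 0 ≤ κ) {u : R2 → ℂ}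
    (hu : ContDiff ℝ 1 u) (h : IsRadiating κ u) (x : R2) :
    (fun r => radialDerivIntegral u x r - Complex.I * κ * circularIntegral u x r)
      =o[atTop] fun r => r ^ (-1 / 2 : ℝ) := by
  refine Asymptotics.isLittleO_iff.2 fun ε hε => ?_
  have : 0 < 4 * κ * ‖x‖ + 2 := by positivity
  filter_upwards [eventually_norm_add_smul_circleDir_le h x (by positivity : 0 < ε / (12 * π)),
    eventually_norm_add_smul_circleDir_le (h.isLittleO_rpow (hu.differentiable one_ne_zero)) x
      (by positivity : 0 < ε / (4 * π) / (4 * κ * ‖x‖ + 2)),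
    eventually_gt_atTop 0, eventually_ge_atTop (2 * ‖x‖), eventually_gt_atTop ‖x‖]
    with r hdefect hgrowth hr0 hrx hr
  rw [radialDerivIntegral_sub_eq hu hr]
  refine (intervalIntegral.norm_integral_le_of_norm_le_const
    (C := ε / (2 * π) * r ^ (-1 / 2 : ℝ)) fun φ _ => ?_).trans_eq ?_
  · have hstretch : ‖((‖x + r • circleDir φ‖ / (r + inner ℝ x (circleDir φ)) : ℝ) : ℂ)‖ ≤ 3 := by
      have hp := add_inner_circleDir_pos hr φ
      rw [Complex.norm_real, norm_of_nonneg (by positivity), div_le_iff₀ hp]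
      linarith [norm_add_smul_circleDir_le x hr0.le φ,
        neg_le_of_abs_le (abs_inner_circleDir_le x φ)]
    have hpow : r ^ (1 / 2 : ℝ) / r = r ^ (-1 / 2 : ℝ) := by
      rw [← rpow_sub_one hr0.ne']
      norm_num
    calc _ ≤ 3 * (ε / (12 * π) * r ^ (-1 / 2 : ℝ)) + (4 * κ * ‖x‖ + 2) / r *
          (ε / (4 * π) / (4 * κ * ‖x‖ + 2) * r ^ (1 / 2 : ℝ)) := by
          refine (norm_add_le _ _).trans (add_le_add ?_ ?_)
          · rw [norm_mul]
            exact mul_le_mul hstretch (hdefect φ) (norm_nonneg _) zero_le_three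
          · rw [norm_mul]
            exact mul_le_mul (norm_recenteringCoeff_le hκ hr0 hrx φ) (hgrowth φ) (norm_nonneg _)
              (by positivity)
      _ = ε / (2 * π) * r ^ (-1 / 2 : ℝ) := by
          rw [← hpow]
          field_simp
          ring
  · rw [norm_of_nonneg (by positivity), abs_of_pos (by linarith [pi_pos])]
    field_simp
    ring

/-! ### The representation formula -/

/-- The Helmholtz operator `Δ + κ²`. -/
def helmholtz (κ : ℝ) (u : R2 → ℂ) (y : R2) : ℂ := Δ u y + (κ : ℂ) ^ 2 * u y

/-- `r` times the Wronskian of the circular integral of `u` around `x` and of the outgoing kernel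
`r ↦ outgoingHankel (κ * r)`. -/
def outgoingWronskian (κ : ℝ) (u : R2 → ℂ) (x : R2) (r : ℝ) : ℂ :=
  r • radialDerivIntegral u x r * outgoingHankel (κ * r : ℝ) -
    circularIntegral u x r * outgoingFlux (κ * r : ℝ)

theorem continuous_helmholtz (κ : ℝ) {u : R2 → ℂ} (hu : ContDiff ℝ 2 u) :
    Continuous (helmholtz κ u) :=
  (continuous_laplacian hu).add (continuous_const.mul hu.continuous)

theorem circularIntegral_helmholtz (κ : ℝ) {u : R2 → ℂ} (hu : ContDiff ℝ 2 u) (x : R2) (r : ℝ) :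
    circularIntegral (helmholtz κ u) x r =
      circularIntegral (Δ u) x r + (κ : ℂ) ^ 2 * circularIntegral u x r := by
  have hΔ := continuous_laplacian hu
  have hu₀ := hu.continuous
  simp only [circularIntegral, helmholtz]
  rw [intervalIntegral.integral_add (Continuous.intervalIntegrable (by fun_prop) _ _)
    (Continuous.intervalIntegrable (by fun_prop) _ _), intervalIntegral.integral_const_mul]

theorem circularIntegral_mul_comp_norm_sub (f : R2 → ℂ) (g : ℝ → ℂ) (x : R2) {r : ℝ} (hr : 0 ≤ r) :
    circularIntegral (fun y => f y * g ‖y - x‖) x r = circularIntegral f x r * g r := by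
  simp only [circularIntegral, add_sub_cancel_left, norm_smul_circleDir hr,
    intervalIntegral.integral_mul_const]

theorem hasDerivAt_outgoingWronskian {κ : ℝ} (hκ : 0 < κ) {u : R2 → ℂ} (hu : ContDiff ℝ 2 u)
    (x : R2) {r : ℝ} (hr : 0 < r) :
    HasDerivAt (outgoingWronskian κ u x)
      (r • circularIntegral (fun y => helmholtz κ u y * outgoingHankel (κ * ‖y - x‖ : ℝ)) x r)
      r := by
  have hre : 0 < ((κ * r : ℝ) : ℂ).re := by simpa using mul_pos hκ hr
  have hscale : HasDerivAt (fun r : ℝ => ((κ * r : ℝ) : ℂ)) (κ : ℂ) r := by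
    simpa using ((hasDerivAt_id r).const_mul κ).ofReal_comp
  have hHankel : HasDerivAt (fun r : ℝ => outgoingHankel (κ * r : ℝ)) _ r :=
    (hasDerivAt_outgoingHankel hre).comp (h₂ := outgoingHankel) r hscale
  have hFlux : HasDerivAt (fun r : ℝ => outgoingFlux (κ * r : ℝ)) _ r :=
    (hasDerivAt_outgoingFlux hre).comp (h₂ := outgoingFlux) r hscale
  refine (((hasDerivAt_mul_radialDerivIntegral hu x r).mul hHankel).sub
    ((hasDerivAt_circularIntegral (hu.of_le one_le_two) x r).mul hFlux)).congr_deriv ?_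
  rw [circularIntegral_mul_comp_norm_sub _ (fun s => outgoingHankel (κ * s : ℝ)) x hr.le,
    circularIntegral_helmholtz κ hu]
  have hκ0 : (κ : ℂ) ≠ 0 := by exact_mod_cast hκ.ne'
  have hr0 : (r : ℂ) ≠ 0 := by exact_mod_cast hr.ne'
  simp only [Complex.real_smul]
  push_cast
  field_simp
  ring

theorem circularIntegral_zero (v : R2 → ℂ) (x : R2) : circularIntegral v x 0 = 2 * π * v x := by
  simp only [circularIntegral, zero_smul, add_zero, intervalIntegral.integral_const,
    Complex.real_smul]
  push_cast
  ring

theorem tendsto_outgoingWronskian_zero {κ : ℝ} (hκ : 0 < κ) {u : R2 → ℂ} (hu : ContDiff ℝ 2 u)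
    (x : R2) : Tendsto (outgoingWronskian κ u x) (𝓝[>] 0) (𝓝 (2 * π * u x)) := by
  have hscale : Tendsto (fun r : ℝ => κ * r) (𝓝[>] 0) (𝓝[>] 0) := by
    refine tendsto_nhdsWithin_iff.2 ⟨?_, ?_⟩
    · simpa using ((continuous_const_mul κ).tendsto 0).mono_left nhdsWithin_le_nhds
    · filter_upwards [self_mem_nhdsWithin] with r hr using mul_pos hκ hr
  have hmean := (hasDerivAt_circularIntegral (hu.of_le one_le_two) x 0).continuousAt.tendsto
    |>.mono_left (nhdsWithin_le_nhds (s := Ioi 0))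
  have hradial := (hasDerivAt_radialDerivIntegral hu x 0).continuousAt.tendsto.mono_left
    (nhdsWithin_le_nhds (s := Ioi 0))
  have hlim := ((hradial.mul (tendsto_mul_outgoingHankel.comp hscale)).const_mul (κ : ℂ)⁻¹).sub
    (hmean.mul (tendsto_outgoingFlux.comp hscale))
  rw [circularIntegral_zero, mul_zero, mul_zero, zero_sub, mul_neg_one, neg_neg] at hlim
  refine hlim.congr fun r => ?_
  have hκ0 : (κ : ℂ) ≠ 0 := by exact_mod_cast hκ.ne'
  simp only [outgoingWronskian, Function.comp_apply, Complex.real_smul]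
  push_cast
  field_simp

theorem isBigO_rpow_of_norm_le {κ C : ℝ} (hκ : 0 < κ) {g : ℂ → ℂ}
    (hg : ∀ w : ℂ, 0 < w.re → ‖g w‖ ≤ C * (2 * w.re) ^ (-1 / 2 : ℝ) * exp (-w.im)) :
    (fun r : ℝ => g (κ * r : ℝ)) =O[atTop] fun r => r ^ (-1 / 2 : ℝ) := by
  refine Asymptotics.IsBigO.of_bound (C * (2 * κ) ^ (-1 / 2 : ℝ)) ?_
  filter_upwards [eventually_gt_atTop 0] with r hr
  refine (hg _ (by simpa using mul_pos hκ hr)).trans_eq ?_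
  rw [Complex.ofReal_re, Complex.ofReal_im, neg_zero, exp_zero, norm_of_nonneg (by positivity),
    ← mul_assoc 2, mul_rpow (by positivity) hr.le]
  ring

theorem IsRadiating.tendsto_outgoingWronskian_atTop {κ : ℝ} (hκ : 0 < κ) {u : R2 → ℂ}
    (hu : ContDiff ℝ 1 u) (h : IsRadiating κ u) (x : R2) :
    Tendsto (outgoingWronskian κ u x) atTop (𝓝 0) := by
  obtain ⟨C, -, hC⟩ := exists_norm_outgoingHankel_le
  obtain ⟨D, hD⟩ := exists_norm_outgoingFlux_sub_le
  have hid : (fun r : ℝ => (r : ℂ)) =O[atTop] fun r : ℝ => r :=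
    Asymptotics.isBigO_of_le _ fun r => (Complex.norm_real r).le
  have hradial := (hid.mul_isLittleO
    (h.isLittleO_radialDerivIntegral_sub hκ.le hu x)).mul_isBigO (isBigO_rpow_of_norm_le hκ hC)
  have hmean := (h.isLittleO_circularIntegral (hu.differentiable one_ne_zero) x).mul_isBigO
    (isBigO_rpow_of_norm_le hκ hD)
  rw [← Asymptotics.isLittleO_one_iff ℝ]
  refine ((hradial.congr' .rfl ?_).sub (hmean.congr' .rfl ?_)).congr_left fun r => ?_
  · filter_upwards [eventually_gt_atTop 0] with r hr
    rw [mul_assoc, ← rpow_add hr, show (-1 / 2 + -1 / 2 : ℝ) = -1 by norm_num, rpow_neg_one,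
      mul_inv_cancel₀ hr.ne']
  · filter_upwards [eventually_gt_atTop 0] with r hr
    rw [← rpow_add hr]
    norm_num
  · simp only [outgoingWronskian, Complex.real_smul]
    push_cast
    ring

theorem integral_Ioi_of_hasDerivAt_of_tendsto_nhdsGT [CompleteSpace F] {f f' : ℝ → F} {a : ℝ}
    {l m : F} (hderiv : ∀ r ∈ Ioi a, HasDerivAt f (f' r) r) (hint : IntegrableOn f' (Ioi a))
    (hl : Tendsto f (𝓝[>] a) (𝓝 l)) (hm : Tendsto f atTop (𝓝 m)) :
    ∫ r in Ioi a, f' r = m - l := by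
  have hupdate : ∀ r ∈ Ioi a, Function.update f a l r = f r := fun r hr =>
    Function.update_of_ne (ne_of_gt hr) _ _
  have h := integral_Ioi_of_hasDerivAt_of_tendsto (f := Function.update f a l) (a := a)
    (by rwa [continuousWithinAt_update_same, Ici_sdiff_left])
    (fun r hr => (hderiv r hr).congr_of_eventuallyEq
      (eventually_of_mem (isOpen_Ioi.mem_nhds hr) hupdate)) hint
    (hm.congr' ((eventually_gt_atTop a).mono fun r hr => (hupdate r hr).symm))
  rwa [Function.update_self] at h

theorem continuous_mul_outgoingHankel {κ : ℝ} (hκ : 0 < κ) {f : R2 → ℂ} (hf : Continuous f)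
    {x : R2} (hx : x ∉ tsupport f) :
    Continuous fun y => f y * outgoingHankel (κ * ‖y - x‖ : ℝ) := by
  refine continuous_iff_continuousAt.2 fun y => ?_
  rcases eq_or_ne y x with rfl | hyx
  · refine (continuousAt_const (y := (0 : ℂ))).congr ?_
    filter_upwards [notMem_tsupport_iff_eventuallyEq.1 hx] with z hz
    simp [hz]
  · have hpos : 0 < ((κ * ‖y - x‖ : ℝ) : ℂ).re := by
      simpa using mul_pos hκ (norm_pos_iff.2 (sub_ne_zero.2 hyx))
    refine hf.continuousAt.mul (ContinuousAt.comp (f := fun y : R2 => ((κ * ‖y - x‖ : ℝ) : ℂ))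
      (hasDerivAt_outgoingHankel hpos).continuousAt (by fun_prop))

theorem IsRadiating.eq_neg_integral_helmholtz_mul_outgoingHankel {κ : ℝ} (hκ : 0 < κ) {u : R2 → ℂ}
    (hu : ContDiff ℝ 2 u) (h : IsRadiating κ u) (hsupp : HasCompactSupport (helmholtz κ u)) {x : R2}
    (hx : x ∉ tsupport (helmholtz κ u)) :
    2 * π * u x = -∫ y, helmholtz κ u y * outgoingHankel (κ * ‖y - x‖ : ℝ) := by
  have hint : Integrable fun y => helmholtz κ u y * outgoingHankel (κ * ‖y - x‖ : ℝ) :=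
    (continuous_mul_outgoingHankel hκ (continuous_helmholtz κ hu) hx)
      |>.integrable_of_hasCompactSupport hsupp.mul_right
  rw [integral_eq_integral_Ioi_smul_circularIntegral hint x,
    integral_Ioi_of_hasDerivAt_of_tendsto_nhdsGT
      (fun r hr => hasDerivAt_outgoingWronskian hκ hu x hr)
      (integrableOn_Ioi_smul_circularIntegral hint x) (tendsto_outgoingWronskian_zero hκ hu x)
      (h.tendsto_outgoingWronskian_atTop hκ (hu.of_le one_le_two) x), zero_sub, neg_neg]

/-! ### Holomorphic extension along a line -/

theorem add_sq_mem_slitPlane {ζ : ℂ} (hζ : 0 < ζ.re) {b : ℝ} (hb : 0 ≤ b) :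
    ζ ^ 2 + b ∈ Complex.slitPlane := by
  rw [Complex.mem_slitPlane_iff]
  rcases eq_or_ne ζ.im 0 with h | h
  · left
    simp only [pow_two, Complex.add_re, Complex.mul_re, h, mul_zero, sub_zero, Complex.ofReal_re]
    positivity
  · right
    have him : (ζ ^ 2 + (b : ℂ)).im = 2 * (ζ.re * ζ.im) := by
      simp [pow_two]
      ring
    rw [him]
    exact mul_ne_zero two_ne_zero (mul_ne_zero hζ.ne' h)

theorem re_le_sqrt_sq_add_re (ζ : ℂ) {b : ℝ} (hb : 0 ≤ b) :
    ζ.re ≤ (Complex.sqrt (ζ ^ 2 + b)).re := by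
  have htriangle : ‖ζ‖ ^ 2 ≤ ‖ζ ^ 2 + b‖ + b := by
    have h := norm_sub_le (ζ ^ 2 + (b : ℂ)) b
    rwa [add_sub_cancel_right, norm_pow, Complex.norm_real, norm_of_nonneg hb] at h
  have hre : ζ.re ^ 2 ≤ (‖ζ ^ 2 + (b : ℂ)‖ + (ζ ^ 2 + b).re) / 2 := by
    rw [Complex.sq_norm, Complex.normSq_apply] at htriangle
    simp only [pow_two, Complex.add_re, Complex.mul_re, Complex.ofReal_re] at htriangle ⊢
    linarith
  rw [Complex.sqrt, Complex.cpow_inv_two_re]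
  exact Real.le_sqrt_of_sq_le hre

theorem im_sub_le_sqrt_sq_add_im {ζ : ℂ} (hζ : 1 ≤ ζ.re) {b : ℝ} (hb : 0 ≤ b) :
    ζ.im - b ≤ (Complex.sqrt (ζ ^ 2 + b)).im := by
  have hre := re_le_sqrt_sq_add_re ζ hb
  have hsq : Complex.sqrt (ζ ^ 2 + b) ^ 2 = ζ ^ 2 + b := Complex.cpow_ofNat_inv_pow _ 2
  generalize Complex.sqrt (ζ ^ 2 + b) = ρ at hre hsq ⊢
  have hmul : ‖ρ - ζ‖ * ‖ρ + ζ‖ = b := by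
    rw [← norm_mul, show (ρ - ζ) * (ρ + ζ) = (b : ℂ) by linear_combination hsq,
      Complex.norm_real, norm_of_nonneg hb]
  have hsum : 1 ≤ ‖ρ + ζ‖ := by
    have h := Complex.re_le_norm (ρ + ζ)
    rw [Complex.add_re] at h
    linarith
  have hsub : ‖ρ - ζ‖ ≤ b := hmul ▸ le_mul_of_one_le_right (norm_nonneg _) hsum
  have him := (abs_le.1 (Complex.abs_im_le_norm (ρ - ζ))).1
  rw [Complex.sub_im] at him
  linarith

/-- The outgoing kernel `r ↦ outgoingHankel (κ * r)` as a holomorphic function of `w = r²`. -/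
def distSqKernel (κ : ℝ) (w : ℂ) : ℂ := outgoingHankel (κ * Complex.sqrt w)

theorem distSqKernel_ofReal_sq (κ : ℝ) {r : ℝ} (hr : 0 ≤ r) :
    distSqKernel κ ((r ^ 2 : ℝ) : ℂ) = outgoingHankel (κ * r : ℝ) := by
  rw [distSqKernel, Complex.sqrt_of_nonneg (Complex.zero_le_real.2 (sq_nonneg r)),
    Complex.ofReal_re, Real.sqrt_sq hr, Complex.ofReal_mul]

theorem sqrt_re_pos {w : ℂ} (hw : w ∈ Complex.slitPlane) : 0 < (Complex.sqrt w).re := by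
  have hsum : 0 < ‖w‖ + w.re := by
    rcases hw with hre | him
    · positivity
    · linarith [neg_abs_le w.re, Complex.abs_re_lt_norm.2 him]
  rw [Complex.sqrt, Complex.cpow_inv_two_re]
  positivity

theorem mul_sqrt_re_pos {κ : ℝ} (hκ : 0 < κ) {w : ℂ} (hw : w ∈ Complex.slitPlane) :
    0 < (κ * Complex.sqrt w).re := by
  simpa using mul_pos hκ (sqrt_re_pos hw)

theorem differentiableOn_distSqKernel {κ : ℝ} (hκ : 0 < κ) :
    DifferentiableOn ℂ (distSqKernel κ) Complex.slitPlane :=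
  differentiableOn_outgoingHankel.comp
    (fun _ hw => ((differentiableAt_id.cpow_const hw).const_mul _).differentiableWithinAt)
    fun _ hw => mul_sqrt_re_pos hκ hw

theorem exists_norm_distSqKernel_sq_add_le {κ : ℝ} (hκ : 0 < κ) :
    ∃ C, ∀ (ζ : ℂ) (b : ℝ), 1 ≤ ζ.re → 0 ≤ b →
      ‖distSqKernel κ (ζ ^ 2 + b)‖ ≤ C * exp (κ * b) * exp (-κ * ζ.im) := by
  obtain ⟨C, hC0, hC⟩ := exists_norm_outgoingHankel_le
  refine ⟨C * (2 * κ) ^ (-1 / 2 : ℝ), fun ζ b hζ hb => ?_⟩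
  have hre := hζ.trans (re_le_sqrt_sq_add_re ζ hb)
  have him := im_sub_le_sqrt_sq_add_im hζ hb
  refine (hC _ (mul_sqrt_re_pos hκ (add_sq_mem_slitPlane (by linarith) hb))).trans ?_
  rw [Complex.re_ofReal_mul, Complex.im_ofReal_mul]
  generalize Complex.sqrt (ζ ^ 2 + b) = ρ at hre him
  calc C * (2 * (κ * ρ.re)) ^ (-1 / 2 : ℝ) * exp (-(κ * ρ.im))
      ≤ C * (2 * κ) ^ (-1 / 2 : ℝ) * exp (κ * b + -κ * ζ.im) := by
        gcongr C * ?_ * exp ?_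
        · exact rpow_le_rpow_of_nonpos (by positivity)
            (by gcongr; exact le_mul_of_one_le_right hκ.le hre) (by norm_num)
        · linarith [mul_le_mul_of_nonneg_left him hκ.le]
    _ = _ := by rw [exp_add]; ring

/-- The holomorphic extension to `z ∈ ℂ` of the squared distance `‖y - (p + z • θ)‖ ^ 2`, for a
unit vector `θ`. -/
def lineDistSq (p θ y : R2) (z : ℂ) : ℂ :=
  (z - (inner ℝ (y - p) θ : ℝ)) ^ 2 + ((‖y - p‖ ^ 2 - inner ℝ (y - p) θ ^ 2 : ℝ) : ℂ)

theorem lineDistSq_ofReal {p θ : R2} (hθ : ‖θ‖ = 1) (y : R2) (s : ℝ) :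
    lineDistSq p θ y s = ((‖y - (p + s • θ)‖ ^ 2 : ℝ) : ℂ) := by
  rw [← sub_sub, norm_sub_sq_real, inner_smul_right, norm_smul, hθ, mul_one, norm_eq_abs, sq_abs,
    lineDistSq]
  push_cast
  ring

theorem hasDerivAt_lineDistSq (p θ y : R2) (z : ℂ) :
    HasDerivAt (lineDistSq p θ y) (2 * (z - (inner ℝ (y - p) θ : ℝ))) z := by
  have h := (((hasDerivAt_id z).sub_const ((inner ℝ (y - p) θ : ℝ) : ℂ)).pow 2).add_const
    ((‖y - p‖ ^ 2 - inner ℝ (y - p) θ ^ 2 : ℝ) : ℂ)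
  exact h.congr_deriv (by simp)

theorem continuous_lineDistSq (p θ : R2) :
    Continuous fun q : ℂ × R2 => lineDistSq p θ q.2 q.1 := by
  unfold lineDistSq
  fun_prop

theorem inner_sq_le_norm_sq {E : Type*} [NormedAddCommGroup E] [InnerProductSpace ℝ E] {θ : E}
    (hθ : ‖θ‖ = 1) (v : E) : inner ℝ v θ ^ 2 ≤ ‖v‖ ^ 2 := by
  have h := abs_real_inner_le_norm v θ
  rw [hθ, mul_one] at h
  exact sq_le_sq.2 (by rwa [abs_norm])

theorem lineDistSq_mem_slitPlane_of_inner_lt_re {p θ y : R2} (hθ : ‖θ‖ = 1) {z : ℂ}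
    (hz : inner ℝ (y - p) θ < z.re) : lineDistSq p θ y z ∈ Complex.slitPlane :=
  add_sq_mem_slitPlane (by simpa using hz) (sub_nonneg.2 (inner_sq_le_norm_sq hθ _))

theorem lineDistSq_mem_slitPlane_of_norm_lt {p θ y : R2} (hθ : ‖θ‖ = 1) {z : ℂ}
    (hz : 4 * ‖z‖ < ‖y - p‖) : lineDistSq p θ y z ∈ Complex.slitPlane := by
  have hinner := abs_real_inner_le_norm (y - p) θ
  rw [hθ, mul_one] at hinner
  have hsq : -‖z‖ ^ 2 ≤ (z ^ 2).re := by
    rw [← norm_pow]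
    exact (abs_le.1 (Complex.abs_re_le_norm (z ^ 2))).1
  have hcross : z.re * inner ℝ (y - p) θ ≤ ‖z‖ * ‖y - p‖ := by
    refine (le_abs_self _).trans ?_
    rw [abs_mul]
    gcongr
    exact Complex.abs_re_le_norm z
  have hre : (lineDistSq p θ y z).re =
      (z ^ 2).re - 2 * (z.re * inner ℝ (y - p) θ) + ‖y - p‖ ^ 2 := by
    simp [lineDistSq, pow_two]
    ring
  refine Complex.mem_slitPlane_iff.2 (Or.inl ?_)
  rw [hre]
  nlinarith [norm_nonneg z]

/-- The holomorphic extension to `z ∈ ℂ` of the outgoing solution of `Δu + κ²u = f` at the point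
`p + z • θ`. -/
def linePotential (κ : ℝ) (p θ : R2) (f : R2 → ℂ) (z : ℂ) : ℂ :=
  -(2 * π : ℂ)⁻¹ * ∫ y in tsupport f, f y * distSqKernel κ (lineDistSq p θ y z)

theorem IsRadiating.linePotential_helmholtz_ofReal {κ : ℝ} (hκ : 0 < κ) {u : R2 → ℂ}
    (hu : ContDiff ℝ 2 u) (h : IsRadiating κ u) (hsupp : HasCompactSupport (helmholtz κ u))
    {p θ : R2} (hθ : ‖θ‖ = 1) {s : ℝ} (hs : p + s • θ ∉ tsupport (helmholtz κ u)) :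
    linePotential κ p θ (helmholtz κ u) s = u (p + s • θ) := by
  have hrep := h.eq_neg_integral_helmholtz_mul_outgoingHankel hκ hu hsupp hs
  have hker : ∀ y, distSqKernel κ (lineDistSq p θ y s) =
      outgoingHankel (κ * ‖y - (p + s • θ)‖ : ℝ) := fun y => by
    rw [lineDistSq_ofReal hθ, distSqKernel_ofReal_sq κ (norm_nonneg _)]
  simp only [linePotential, hker]
  rw [setIntegral_eq_integral_of_forall_compl_eq_zero fun y hy => by
    rw [image_eq_zero_of_notMem_tsupport hy, zero_mul], neg_mul, ← mul_neg, ← hrep,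
    inv_mul_cancel_left₀ (by simp [pi_ne_zero])]

theorem differentiableOn_linePotential {κ : ℝ} (hκ : 0 < κ) {p θ : R2} {f : R2 → ℂ}
    (hf : Continuous f) (hfc : HasCompactSupport f) {Ω : Set ℂ} (hΩ : IsOpen Ω)
    (hslit : ∀ z ∈ Ω, ∀ y ∈ tsupport f, lineDistSq p θ y z ∈ Complex.slitPlane) :
    DifferentiableOn ℂ (linePotential κ p θ f) Ω := by
  have hker := differentiableOn_distSqKernel hκ
  have hderiv := (hker.deriv Complex.isOpen_slitPlane).continuousOn
  have hmaps : MapsTo (fun q : ℂ × R2 => lineDistSq p θ q.2 q.1) (Ω ×ˢ tsupport f)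
    Complex.slitPlane := fun q hq => hslit q.1 hq.1 q.2 hq.2
  intro z hz
  refine ((hasDerivAt_setIntegral_of_continuousOn (𝕜 := ℂ) hΩ hfc
    (F' := fun z y => f y * (deriv (distSqKernel κ) (lineDistSq p θ y z) *
      (2 * (z - (inner ℝ (y - p) θ : ℝ))))) (fun z hz => ?_) ?_ (fun z hz y hy => ?_)
      hz).differentiableAt.const_mul _).differentiableWithinAt
  · exact hf.continuousOn.mul (hker.continuousOn.comp
      ((continuous_lineDistSq p θ).comp (Continuous.prodMk_right z)).continuousOn
      fun y hy => hslit z hz y hy)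
  · exact (hf.comp continuous_snd).continuousOn.mul
      ((hderiv.comp (continuous_lineDistSq p θ).continuousOn hmaps).mul
        (Continuous.continuousOn (by fun_prop)))
  · exact ((hker.differentiableAt (Complex.isOpen_slitPlane.mem_nhds
      (hslit z hz y hy))).hasDerivAt.comp z (hasDerivAt_lineDistSq p θ y z)).const_mul (f y)

theorem exists_norm_linePotential_le {κ : ℝ} (hκ : 0 < κ) {p θ : R2} (hθ : ‖θ‖ = 1) {f : R2 → ℂ}
    (hf : Continuous f) (hfc : HasCompactSupport f) :
    ∃ C, ∀ z : ℂ, (∀ y ∈ tsupport f, inner ℝ (y - p) θ ≤ z.re - 1) →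
      ‖linePotential κ p θ f z‖ ≤ C * exp (-κ * z.im) := by
  obtain ⟨C, hC⟩ := exists_norm_distSqKernel_sq_add_le hκ
  set bound : R2 → ℝ := fun y =>
    ‖f y‖ * (C * exp (κ * (‖y - p‖ ^ 2 - inner ℝ (y - p) θ ^ 2)))
  have hbound : IntegrableOn bound (tsupport f) :=
    (Continuous.continuousOn (by fun_prop)).integrableOn_compact hfc
  refine ⟨‖-(2 * π : ℂ)⁻¹‖ * ∫ y in tsupport f, bound y, fun z hz => ?_⟩
  rw [linePotential, norm_mul, mul_assoc, ← integral_mul_const]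
  refine mul_le_mul_of_nonneg_left (norm_integral_le_of_norm_le (hbound.mul_const _) ?_)
    (norm_nonneg _)
  refine ae_restrict_of_forall_mem (isClosed_tsupport f).measurableSet fun y hy => ?_
  have hker := hC (z - (inner ℝ (y - p) θ : ℝ)) (‖y - p‖ ^ 2 - inner ℝ (y - p) θ ^ 2)
    (by simpa using (by linarith [hz y hy] : 1 ≤ z.re - inner ℝ (y - p) θ))
    (sub_nonneg.2 (inner_sq_le_norm_sq hθ _))
  rw [Complex.sub_im, Complex.ofReal_im, sub_zero] at hker
  rw [norm_mul, mul_assoc]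
  exact mul_le_mul_of_nonneg_left hker (norm_nonneg _)

/-! ### A Carlson type theorem -/

/-- The multiplier `exp (-c (1 + z) log (1 + z))`, which grows at most exponentially in `|Im z|` on
the right half-plane and yet decays superexponentially along the positive real axis. -/
def carlsonFactor (c : ℝ) (z : ℂ) : ℂ := Complex.exp (-c * ((1 + z) * Complex.log (1 + z)))

theorem norm_carlsonFactor_le {c : ℝ} (hc : 0 ≤ c) {z : ℂ} (hz : 0 ≤ z.re) :
    ‖carlsonFactor c z‖ ≤ exp (c * (π / 2) * |z.im|) := by
  have hnorm : 1 ≤ ‖1 + z‖ := by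
    have h := Complex.re_le_norm (1 + z)
    rw [Complex.add_re, Complex.one_re] at h
    linarith
  have harg : z.im * (1 + z).arg ≤ |z.im| * (π / 2) := by
    refine (le_abs_self _).trans ?_
    rw [abs_mul]
    gcongr
    exact Complex.abs_arg_le_pi_div_two_iff.2 (by simp; linarith)
  have hlog : 0 ≤ (1 + z.re) * log ‖1 + z‖ := mul_nonneg (by linarith) (log_nonneg hnorm)
  have hre : ((1 + z) * Complex.log (1 + z)).re =
      (1 + z.re) * log ‖1 + z‖ - z.im * (1 + z).arg := by
    simp [Complex.log_re, Complex.log_im]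
  rw [carlsonFactor, Complex.norm_exp, ← Complex.ofReal_neg, Complex.re_ofReal_mul, hre, exp_le_exp]
  nlinarith

theorem differentiableOn_carlsonFactor (c : ℝ) :
    DifferentiableOn ℂ (carlsonFactor c) {z | -1 < z.re} := fun z hz => by
  have hslit : 1 + z ∈ Complex.slitPlane :=
    Or.inl (by simpa using (neg_lt_iff_pos_add'.1 hz : 0 < 1 + z.re))
  have hlin : DifferentiableAt ℂ (fun z : ℂ => 1 + z) z := by fun_prop
  exact ((hlin.mul (hlin.clog hslit)).const_mul _).cexp.differentiableWithinAt

theorem superpolynomialDecay_exp_neg_mul_log {c : ℝ} (hc : 0 < c) :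
    Asymptotics.SuperpolynomialDecay atTop exp
      fun x : ℝ => exp (-c * ((1 + x) * log (1 + x))) := fun n => by
  have hone : Tendsto (fun x : ℝ => 1 + x) atTop atTop :=
    tendsto_atTop_add_const_left _ _ tendsto_id
  have hexponent : Tendsto (fun x : ℝ => (1 + x) * (n - c * log (1 + x))) atTop atBot :=
    hone.atTop_mul_atBot₀ (tendsto_const_nhds.add_atBot
      (tendsto_neg_atTop_atBot.comp ((tendsto_log_atTop.comp hone).const_mul_atTop hc)))
  refine squeeze_zero (fun x => by positivity) (fun x => ?_) (tendsto_exp_atBot.comp hexponent)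
  rw [← exp_nat_mul, ← exp_add]
  refine exp_le_exp.2 ?_
  linarith [n.cast_nonneg (α := ℝ)]

theorem norm_carlsonFactor_ofReal (c : ℝ) {x : ℝ} (hx : 0 ≤ x) :
    ‖carlsonFactor c x‖ = exp (-c * ((1 + x) * log (1 + x))) := by
  rw [carlsonFactor, ← Complex.ofReal_one, ← Complex.ofReal_add,
    ← Complex.ofReal_log (by positivity), ← Complex.ofReal_mul, ← Complex.ofReal_neg,
    ← Complex.ofReal_mul, ← Complex.ofReal_exp, Complex.norm_of_nonneg (exp_pos _).le]

theorem eqOn_zero_of_norm_le_exp_neg_abs_im {E : Type*} [NormedAddCommGroup E] [NormedSpace ℂ E]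
    {κ C : ℝ} (hκ : 0 < κ) {f : ℂ → E} (hf : DiffContOnCl ℂ f {z | 0 < z.re})
    (hb : ∀ z : ℂ, 0 ≤ z.re → ‖f z‖ ≤ C * exp (-κ * |z.im|)) : EqOn f 0 {z | 0 ≤ z.re} := by
  set c : ℝ := 2 * κ / π with hc_def
  have hc : 0 < c := by positivity
  have hcκ : c * (π / 2) = κ := by
    rw [hc_def]
    field_simp
  have hm : DiffContOnCl ℂ (carlsonFactor c) {z | 0 < z.re} :=
    ((differentiableOn_carlsonFactor c).mono fun z hz => by
      rw [Complex.closure_setOfPred_lt_re] at hz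
      exact neg_one_lt_zero.trans_le (mem_ofPred.1 hz)).diffContOnCl
  have hbound : ∀ z : ℂ, 0 ≤ z.re → ‖carlsonFactor c z • f z‖ ≤ C := fun z hz => by
    have hmz := norm_carlsonFactor_le hc.le hz
    rw [hcκ] at hmz
    calc ‖carlsonFactor c z • f z‖ = ‖carlsonFactor c z‖ * ‖f z‖ := norm_smul _ _
      _ ≤ exp (κ * |z.im|) * (C * exp (-κ * |z.im|)) := by
        gcongr
        exact hb z hz
      _ = C := by rw [mul_left_comm, ← exp_add, neg_mul, add_neg_cancel, exp_zero, mul_one]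
  have hreal : Asymptotics.SuperpolynomialDecay atTop exp
      fun x : ℝ => ‖carlsonFactor c x • f x‖ := by
    refine ((superpolynomialDecay_exp_neg_mul_log hc).const_mul C).trans_eventually_abs_le ?_
    filter_upwards [eventually_ge_atTop 0] with x hx
    have hfx : ‖f x‖ ≤ C := by simpa using hb x (by simpa using hx)
    have hC : 0 ≤ C := (norm_nonneg _).trans hfx
    simp only [Function.comp_apply]
    rw [abs_norm, abs_of_nonneg (by positivity), norm_smul, norm_carlsonFactor_ofReal c hx,
      mul_comm]
    gcongr
  have hzero := PhragmenLindelof.eq_zero_on_right_half_plane_of_superexponential_decay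
    (hm.smul hf) ⟨0, two_pos, 0, Asymptotics.IsBigO.of_bound C
      (eventually_inf_principal.2 (.of_forall fun z hz => by simpa using hbound z (le_of_lt hz)))⟩
    hreal ⟨C, fun x => hbound _ (by simp)⟩
  exact fun z hz => (smul_eq_zero.1 (hzero hz)).resolve_left (Complex.exp_ne_zero _)

theorem eqOn_conj_of_im_eq_zero {a : ℝ} {f : ℂ → ℂ} (hf : DifferentiableOn ℂ f {z | a < z.re})
    (him : ∀ s : ℝ, a < s → (f s).im = 0) :
    EqOn f (fun z => star (f (star z))) {z | a < z.re} := by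
  have hopen : IsOpen {z : ℂ | a < z.re} := isOpen_lt continuous_const Complex.continuous_re
  have hconj : DifferentiableOn ℂ (star ∘ f ∘ star) {z : ℂ | a < z.re} := fun z hz => by
    have h : DifferentiableAt ℂ f (star z) :=
      hf.differentiableAt (hopen.mem_nhds (by simpa using hz))
    simpa using h.conj_conj.differentiableWithinAt
  have hreal : Tendsto (fun s : ℝ => (s : ℂ)) (𝓝[>] (a + 1)) (𝓝[≠] ((a + 1 : ℝ) : ℂ)) :=
    tendsto_nhdsWithin_of_tendsto_nhds_of_eventually_within _
      (Complex.continuous_ofReal.continuousAt.tendsto.mono_left nhdsWithin_le_nhds)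
      (eventually_nhdsWithin_of_forall fun s hs h => (ne_of_gt hs) (Complex.ofReal_injective h))
  refine (hf.analyticOnNhd hopen).eqOn_of_preconnected_of_frequently_eq
    (hconj.analyticOnNhd hopen) (convex_halfSpace_re_gt a).isPreconnected (by simp)
    (hreal.frequently (Eventually.frequently (eventually_nhdsWithin_of_forall fun s hs => ?_)))
  simp only [Complex.star_def, Complex.conj_ofReal]
  exact (Complex.conj_eq_iff_im.2 (him s ((lt_add_one a).trans hs))).symm

/-! ### Cutoffs and analyticity -/

theorem exists_contDiff_eventuallyEq_nhdsSet {E : Type*} [NormedAddCommGroup E] [NormedSpace ℝ E]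
    [FiniteDimensional ℝ E] {n : ℕ∞} {f : E → F} {U A : Set E} (hU : IsOpen U) (hA : IsClosed A)
    (hAU : A ⊆ U) (hf : ContDiffOn ℝ n f U) :
    ∃ g : E → F, ContDiff ℝ n g ∧ tsupport g ⊆ U ∧ g =ᶠ[𝓝ˢ A] f := by
  obtain ⟨χ, hχU, hχA, -⟩ := exists_contMDiffMap_zero_one_nhds_of_isClosed (n := n)
    (modelWithCornersSelf ℝ E) hU.isClosed_compl hA (disjoint_compl_left_iff_subset.2 hAU)
  have hχ : ContDiff ℝ n χ := χ.contMDiff.contDiff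
  have hzero : ∀ x ∉ U, (fun y => χ y • f y) =ᶠ[𝓝 x] 0 := fun x hx => by
    filter_upwards [eventually_nhdsSet_iff_forall.1 hχU x hx] with y hy
    simp [hy]
  refine ⟨fun y => χ y • f y, contDiff_iff_contDiffAt.2 fun x => ?_, fun x hx => ?_, ?_⟩
  · by_cases hx : x ∈ U
    · exact hχ.contDiffAt.smul (hf.contDiffAt (hU.mem_nhds hx))
    · exact contDiffAt_const.congr_of_eventuallyEq (hzero x hx)
  · by_contra hxU
    exact notMem_tsupport_iff_eventuallyEq.2 (hzero x hxU) hx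
  · filter_upwards [hχA] with y hy
    simp [hy]

theorem helmholtz_congr_nhds {κ : ℝ} {u v : R2 → ℂ} {x : R2} (h : u =ᶠ[𝓝 x] v) :
    helmholtz κ u x = helmholtz κ v x := by
  rw [helmholtz, helmholtz, (InnerProductSpace.laplacian_congr_nhds h).eq_of_nhds,
    h.eq_of_nhds]

theorem tsupport_helmholtz_subset (κ : ℝ) (u : R2 → ℂ) : tsupport (helmholtz κ u) ⊆ tsupport u := by
  refine fun x hx => by_contra fun hxu => ?_
  refine notMem_tsupport_iff_eventuallyEq.2 ?_ hx
  filter_upwards [(notMem_tsupport_iff_eventuallyEq.1 hxu).eventually_nhds] with y hy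
  rw [helmholtz_congr_nhds hy]
  have hΔ : Δ (0 : R2 → ℂ) y = 0 := congrFun InnerProductSpace.laplacian_const y
  simp only [helmholtz, hΔ, Pi.zero_apply, mul_zero, add_zero]

theorem notMem_tsupport_helmholtz {κ : ℝ} {u ψ : R2 → ℂ} {U : Set R2} (hU : IsOpen U)
    (hψ : ∀ y ∈ U, helmholtz κ ψ y = 0) {x : R2} (hx : x ∈ U) (h : u =ᶠ[𝓝 x] ψ) :
    x ∉ tsupport (helmholtz κ u) := by
  refine notMem_tsupport_iff_eventuallyEq.2 ?_
  filter_upwards [h.eventually_nhds, hU.mem_nhds hx] with y hy hyU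
  rw [helmholtz_congr_nhds hy, hψ y hyU, Pi.zero_apply]

theorem sommerfeldDefect_congr_nhds {κ : ℝ} {u v : R2 → ℂ} {x : R2} (h : u =ᶠ[𝓝 x] v) :
    sommerfeldDefect κ u x = sommerfeldDefect κ v x := by
  rw [sommerfeldDefect, sommerfeldDefect, h.fderiv_eq, h.eq_of_nhds]

theorem isRadiating_of_hasCompactSupport (κ : ℝ) {u : R2 → ℂ} (hu : HasCompactSupport u) :
    IsRadiating κ u := by
  refine (Asymptotics.isLittleO_zero _ _).congr' ?_ .rfl
  filter_upwards [Metric.cobounded_eq_cocompact (α := R2) ▸ hu.isCompact.compl_mem_cocompact]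
    with x hx
  rw [sommerfeldDefect_congr_nhds (notMem_tsupport_iff_eventuallyEq.1 hx)]
  simp [sommerfeldDefect]

theorem IsRadiationSolution.helmholtz_eq_zero {κ : ℝ} {U : Set R2} (hU : IsOpen U) {ψ : R2 → ℂ}
    (h : IsRadiationSolution κ U ψ) {x : R2} (hx : x ∈ U) : helmholtz κ ψ x = 0 := by
  rw [helmholtz, ← laplacian2_eq_laplacian (h.1.contDiffAt (hU.mem_nhds hx)), h.2.1 x hx]

theorem analyticAt_comp_add_smul {κ : ℝ} (hκ : 0 < κ) {U : Set R2} (hU : IsOpen U)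
    {ψ : R2 → ℂ} (hψ : ContDiffOn ℝ 2 ψ U) (hzero : ∀ y ∈ U, helmholtz κ ψ y = 0) {p θ : R2}
    (hθ : ‖θ‖ = 1) (hp : p ∈ U) : AnalyticAt ℝ (fun s : ℝ => ψ (p + s • θ)) 0 := by
  obtain ⟨u, hu, hut, huψ⟩ := exists_contDiff_eventuallyEq_nhdsSet
    (hU.inter (Metric.isOpen_ball (x := p) (ε := 1))) isClosed_singleton
    (singleton_subset_iff.2 ⟨hp, Metric.mem_ball_self one_pos⟩) (hψ.mono inter_subset_left)
  rw [nhdsSet_singleton] at huψ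
  have hsupp : HasCompactSupport u := (isCompact_closedBall p 1).of_isClosed_subset
    (isClosed_tsupport u) (hut.trans (inter_subset_right.trans Metric.ball_subset_closedBall))
  have hsource : HasCompactSupport (helmholtz κ u) :=
    hsupp.of_isClosed_subset (isClosed_tsupport _) (tsupport_helmholtz_subset κ u)
  obtain ⟨δ, hδ, hball⟩ := Metric.isOpen_iff.1 (isClosed_tsupport (helmholtz κ u)).isOpen_compl p
    (notMem_tsupport_helmholtz hU hzero hp huψ)
  have hholo : DifferentiableOn ℂ (linePotential κ p θ (helmholtz κ u)) (Metric.ball 0 (δ / 4)) :=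
    differentiableOn_linePotential hκ (continuous_helmholtz κ hu) hsource Metric.isOpen_ball
      fun z hz y hy => by
        refine lineDistSq_mem_slitPlane_of_norm_lt hθ ?_
        have hy' : δ ≤ dist y p := not_lt.1 fun hlt => hball hlt hy
        rw [← dist_eq_norm]
        linarith [mem_ball_zero_iff.1 hz]
  have hanalytic : AnalyticAt ℝ (fun s : ℝ => linePotential κ p θ (helmholtz κ u) s) 0 :=
    (hholo.analyticAt (by simpa using Metric.ball_mem_nhds (0 : ℂ) (by positivity))).restrictScalars
      |>.fun_comp (Complex.ofRealCLM.analyticAt 0)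
  have hline : Tendsto (fun s : ℝ => p + s • θ) (𝓝 0) (𝓝 p) :=
    Continuous.tendsto' (by fun_prop) _ _ (by simp)
  refine hanalytic.congr ?_
  filter_upwards [hline.eventually (Metric.ball_mem_nhds p hδ), hline.eventually huψ]
    with s hs hsψ
  rw [(isRadiating_of_hasCompactSupport κ hsupp).linePotential_helmholtz_ofReal hκ hu hsource hθ
    (hball hs), hsψ]

theorem IsRadiationSolution.exists_isRadiating_eq {κ : ℝ} {U : Set R2} (hU : IsOpen U)
    (hK : Bornology.IsBounded Uᶜ) {ψ : R2 → ℂ} (h : IsRadiationSolution κ U ψ) :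
    ∃ (u : R2 → ℂ) (R : ℝ), ContDiff ℝ 2 u ∧ IsRadiating κ u ∧ (∀ y, R ≤ ‖y‖ → u y = ψ y) ∧
      tsupport (helmholtz κ u) ⊆ Metric.ball 0 R := by
  obtain ⟨R, hR⟩ := hK.subset_ball 0
  have hfar : ∀ y : R2, R ≤ ‖y‖ → y ∈ U := fun y hy => by
    by_contra hyU
    exact (mem_ball_zero_iff.1 (hR hyU)).not_ge hy
  obtain ⟨u, hu, -, huψ⟩ := exists_contDiff_eventuallyEq_nhdsSet hU
    (isClosed_le continuous_const continuous_norm) hfar h.1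
  have hnhds : ∀ y : R2, R ≤ ‖y‖ → u =ᶠ[𝓝 y] ψ := eventually_nhdsSet_iff_forall.1 huψ
  refine ⟨u, R, hu, Asymptotics.isLittleO_iff.2 fun ε hε => ?_,
    fun y hy => (hnhds y hy).eq_of_nhds, fun y hy => ?_⟩
  · obtain ⟨S, hS, hdefect⟩ := h.2.2 ε hε
    filter_upwards [tendsto_norm_cobounded_atTop.eventually_ge_atTop R,
      tendsto_norm_cobounded_atTop.eventually_ge_atTop S] with y hyR hyS
    have hy : 0 < ‖y‖ := hS.trans_le hyS
    have hsommerfeld := (hdefect y (hfar y hyR) hyS).le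
    rw [norm_mul, Complex.norm_real, norm_of_nonneg (Real.sqrt_nonneg _), mul_comm,
      ← le_div_iff₀ (Real.sqrt_pos.2 hy)] at hsommerfeld
    rw [sommerfeldDefect_congr_nhds (hnhds y hyR), norm_of_nonneg (by positivity), neg_div,
      rpow_neg hy.le, ← Real.sqrt_eq_rpow, ← div_eq_mul_inv]
    exact hsommerfeld
  · by_contra hyR
    rw [mem_ball_zero_iff, not_lt] at hyR
    exact notMem_tsupport_helmholtz hU (fun z hz => h.helmholtz_eq_zero hU hz) (hfar y hyR)
      (hnhds y hyR) hy

theorem inner_sub_add_smul_le {E : Type*} [NormedAddCommGroup E] [InnerProductSpace ℝ E] {p θ : E}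
    (hθ : ‖θ‖ = 1) (y : E) (T : ℝ) :
    inner ℝ (y - (p + T • θ)) θ ≤ ‖y‖ + ‖p‖ - T := by
  have hsub : inner ℝ (y - p) θ ≤ ‖y‖ + ‖p‖ :=
    calc inner ℝ (y - p) θ ≤ ‖y - p‖ * ‖θ‖ := real_inner_le_norm _ _
      _ ≤ ‖y‖ + ‖p‖ := by rw [hθ, mul_one]; exact norm_sub_le y p
  rw [← sub_sub, inner_sub_left, real_inner_smul_left, real_inner_self_eq_norm_sq, hθ]
  linarith

theorem sub_norm_le_norm_add_smul {p θ : F} (hθ : ‖θ‖ = 1) (s : ℝ) :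
    s - ‖p‖ ≤ ‖p + s • θ‖ := by
  have h := norm_sub_norm_le (s • θ) (-p)
  rw [norm_smul, hθ, mul_one, norm_neg, sub_neg_eq_add, add_comm _ p] at h
  linarith [le_norm_self s]

theorem IsRadiationSolution.exists_holomorphic_extension {κ : ℝ} (hκ : 0 < κ) {U : Set R2}
    (hU : IsOpen U) (hK : Bornology.IsBounded Uᶜ) {ψ : R2 → ℂ} (h : IsRadiationSolution κ U ψ)
    (p : R2) {θ : R2} (hθ : ‖θ‖ = 1) :
    ∃ (T C : ℝ) (G : ℂ → ℂ), 1 ≤ T ∧ DifferentiableOn ℂ G {z | -1 < z.re} ∧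
      (∀ z : ℂ, -1 < z.re → ‖G z‖ ≤ C * exp (-κ * z.im)) ∧
      ∀ s : ℝ, -1 < s → G s = ψ (p + (T + s) • θ) := by
  obtain ⟨u, R, hu, hrad, huψ, hball⟩ := h.exists_isRadiating_eq hU hK
  have hf := continuous_helmholtz κ hu
  have hsupp : HasCompactSupport (helmholtz κ u) := (isCompact_closedBall 0 R).of_isClosed_subset
    (isClosed_tsupport _) (hball.trans Metric.ball_subset_closedBall)
  obtain ⟨T, hT, hTR⟩ : ∃ T, 1 ≤ T ∧ R + ‖p‖ + 2 ≤ T := ⟨_, le_max_left _ _, le_max_right _ _⟩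
  have hbehind : ∀ y ∈ tsupport (helmholtz κ u), inner ℝ (y - (p + T • θ)) θ ≤ -2 := fun y hy => by
    linarith [inner_sub_add_smul_le (p := p) hθ y T, mem_ball_zero_iff.1 (hball hy)]
  obtain ⟨C, hC⟩ := exists_norm_linePotential_le (p := p + T • θ) hκ hθ hf hsupp
  refine ⟨T, C, linePotential κ (p + T • θ) θ (helmholtz κ u), hT,
    differentiableOn_linePotential hκ hf hsupp (isOpen_lt continuous_const Complex.continuous_re)
      fun z hz y hy => lineDistSq_mem_slitPlane_of_inner_lt_re hθ ?_,
    fun z hz => hC z fun y hy => by linarith [hbehind y hy], fun s hs => ?_⟩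
  · rw [mem_ofPred_eq] at hz
    linarith [hbehind y hy]
  · have hfar : R ≤ ‖p + (T + s) • θ‖ := by
      linarith [sub_norm_le_norm_add_smul (p := p) hθ (T + s)]
    have hpoint : p + T • θ + s • θ = p + (T + s) • θ := by rw [add_smul, add_assoc]
    rw [hrad.linePotential_helmholtz_ofReal hκ hu hsupp hθ, hpoint, huψ _ hfar]
    rw [hpoint]
    exact fun hmem => (mem_ball_zero_iff.1 (hball hmem)).not_ge hfar

/-! ### Uniqueness on rays -/

theorem IsRadiationSolution.sub {κ : ℝ} {U : Set R2} (hU : IsOpen U) {ψ₁ ψ₂ : R2 → ℂ}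
    (h₁ : IsRadiationSolution κ U ψ₁) (h₂ : IsRadiationSolution κ U ψ₂) :
    IsRadiationSolution κ U (ψ₁ - ψ₂) := by
  have hat₁ : ∀ x ∈ U, ContDiffAt ℝ 2 ψ₁ x := fun x hx => h₁.1.contDiffAt (hU.mem_nhds hx)
  have hat₂ : ∀ x ∈ U, ContDiffAt ℝ 2 ψ₂ x := fun x hx => h₂.1.contDiffAt (hU.mem_nhds hx)
  refine ⟨h₁.1.sub h₂.1, fun x hx => ?_, fun ε hε => ?_⟩
  · have hsub : laplacian2 (ψ₁ - ψ₂) x = laplacian2 ψ₁ x - laplacian2 ψ₂ x := by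
      rw [laplacian2_eq_laplacian (hat₁ x hx), laplacian2_eq_laplacian (hat₂ x hx),
        ← (hat₁ x hx).laplacian_sub (hat₂ x hx)]
      exact laplacian2_eq_laplacian ((hat₁ x hx).sub (hat₂ x hx))
    rw [hsub, Pi.sub_apply]
    linear_combination h₁.2.1 x hx - h₂.2.1 x hx
  · obtain ⟨R₁, hR₁, hdefect₁⟩ := h₁.2.2 (ε / 2) (by positivity)
    obtain ⟨R₂, -, hdefect₂⟩ := h₂.2.2 (ε / 2) (by positivity)
    refine ⟨max R₁ R₂, lt_max_of_lt_left hR₁, fun x hx hxR => ?_⟩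
    rw [fderiv_sub ((hat₁ x hx).differentiableAt two_ne_zero)
      ((hat₂ x hx).differentiableAt two_ne_zero), sub_apply, Pi.sub_apply]
    refine lt_of_eq_of_lt (congrArg norm ?_) ((norm_sub_le _ _).trans_lt
      ((add_lt_add (hdefect₁ x hx ((le_max_left _ _).trans hxR))
        (hdefect₂ x hx ((le_max_right _ _).trans hxR))).trans_eq (add_halves ε)))
    ring

/-- The open ray starting at `p` with direction `θ`; the paper's `L⁻` is the ray with
direction `-θ`. -/
def openRay (p θ : R2) : Set R2 := {x | ∃ s : ℝ, 0 < s ∧ x = p + s • θ}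

theorem add_smul_mem_openRay (p θ : R2) {s : ℝ} (hs : 0 < s) : p + s • θ ∈ openRay p θ :=
  ⟨s, hs, rfl⟩

theorem openRay_neg (p θ : R2) : openRay p (-θ) = {x | ∃ s : ℝ, 0 < s ∧ x = p - s • θ} := by
  simp only [openRay, smul_neg, sub_eq_add_neg]

theorem IsRadiationSolution.analyticOnNhd_comp_add_smul {κ : ℝ} (hκ : 0 < κ) {U : Set R2}
    (hU : IsOpen U) {ψ : R2 → ℂ} (h : IsRadiationSolution κ U ψ) {p θ : R2} (hθ : ‖θ‖ = 1)
    (hray : openRay p θ ⊆ U) : AnalyticOnNhd ℝ (fun s : ℝ => ψ (p + s • θ)) (Ioi 0) := by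
  intro a ha
  have hlocal := AnalyticAt.fun_comp_of_eq
    (analyticAt_comp_add_smul hκ hU h.1 (fun y hy => h.helmholtz_eq_zero hU hy) hθ
      (hray (add_smul_mem_openRay p θ ha)))
    (analyticAt_id.fun_sub analyticAt_const) (sub_self a)
  simpa only [id, add_assoc, ← add_smul, add_sub_cancel] using hlocal

theorem IsRadiationSolution.eventually_eq_zero_of_im_eq_zero {κ : ℝ} (hκ : 0 < κ) {U : Set R2}
    (hU : IsOpen U) (hK : Bornology.IsBounded Uᶜ) {ψ : R2 → ℂ} (h : IsRadiationSolution κ U ψ)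
    {p θ : R2} (hθ : ‖θ‖ = 1) (him : ∀ s : ℝ, 0 < s → (ψ (p + s • θ)).im = 0) :
    ∀ᶠ s : ℝ in atTop, ψ (p + s • θ) = 0 := by
  obtain ⟨T, C, G, hT, hG, hbound, hGψ⟩ := h.exists_holomorphic_extension hκ hU hK p hθ
  have hreal : ∀ s : ℝ, -1 < s → (G s).im = 0 := fun s hs => by
    rw [hGψ s hs, him _ (by linarith)]
  have hconj := eqOn_conj_of_im_eq_zero hG hreal
  have hdecay : ∀ z : ℂ, 0 ≤ z.re → ‖G z‖ ≤ C * exp (-κ * |z.im|) := fun z hz => by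
    have hz' : -1 < z.re := by linarith
    rcases abs_choice z.im with habs | habs <;> rw [habs]
    · exact hbound z hz'
    · rw [hconj hz', norm_star]
      simpa using hbound (star z) (by simpa using hz')
  have hclosure : closure {z : ℂ | 0 < z.re} ⊆ {z | -1 < z.re} := by
    rw [Complex.closure_setOfPred_lt_re]
    exact fun z hz => mem_ofPred.2 (neg_one_lt_zero.trans_le hz)
  have hzero := eqOn_zero_of_norm_le_exp_neg_abs_im hκ (hG.mono hclosure).diffContOnCl hdecay
  filter_upwards [eventually_ge_atTop T] with s hs
  have hs' : 0 ≤ s - T := sub_nonneg.2 hs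
  rw [← add_sub_cancel T s, ← hGψ (s - T) (by linarith)]
  exact hzero (by simpa using hs')

theorem IsRadiationSolution.eqOn_zero_openRay {κ : ℝ} (hκ : 0 < κ) {U : Set R2} (hU : IsOpen U)
    (hK : Bornology.IsBounded Uᶜ) {ψ : R2 → ℂ} (h : IsRadiationSolution κ U ψ) {p θ : R2}
    (hθ : ‖θ‖ = 1) (hray : openRay p θ ⊆ U) {s₀ : ℝ} (hs₀ : 0 < s₀)
    (him : ∀ᶠ s : ℝ in 𝓝 s₀, (ψ (p + s • θ)).im = 0) : EqOn ψ 0 (openRay p θ) := by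
  have hanalytic := h.analyticOnNhd_comp_add_smul hκ hU hθ hray
  have hanalytic_im : AnalyticOnNhd ℝ (fun s : ℝ => (ψ (p + s • θ)).im) (Ioi 0) := fun s hs =>
    (Complex.imCLM.analyticAt _).fun_comp (hanalytic s hs)
  have him_zero : ∀ s : ℝ, 0 < s → (ψ (p + s • θ)).im = 0 := fun s hs =>
    hanalytic_im.eqOn_zero_of_preconnected_of_eventuallyEq_zero isPreconnected_Ioi hs₀ him hs
  obtain ⟨S, hS⟩ := eventually_atTop.1 (h.eventually_eq_zero_of_im_eq_zero hκ hU hK hθ him_zero)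
  have hpos : |S| + 1 ∈ Ioi (0 : ℝ) := mem_Ioi.2 (by positivity)
  rintro x ⟨s, hs, rfl⟩
  refine hanalytic.eqOn_zero_of_preconnected_of_eventuallyEq_zero isPreconnected_Ioi hpos ?_ hs
  filter_upwards [Ioi_mem_nhds (show S < |S| + 1 by linarith [le_abs_self S])] with r hr
  exact hS r (le_of_lt hr)

theorem im_determines_radiation_solution_on_two_rays_general {κ : ℝ} (hκ : 0 < κ) {U : Set R2}
    (hU : IsOpen U) (hK : Bornology.IsBounded Uᶜ) {ψ₁ ψ₂ : R2 → ℂ}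
    (h₁ : IsRadiationSolution κ U ψ₁) (h₂ : IsRadiationSolution κ U ψ₂) {p θ : R2} (hθ : ‖θ‖ = 1)
    (hray : openRay p θ ⊆ U) {V : Set R2} (hV : IsOpen V) (hne : (V ∩ openRay p θ).Nonempty)
    (him : ∀ x ∈ V ∩ openRay p θ, (ψ₁ x).im = (ψ₂ x).im) : EqOn ψ₁ ψ₂ (openRay p θ) := by
  obtain ⟨-, hmem, s₀, hs₀, rfl⟩ := hne
  have hline : Continuous fun s : ℝ => p + s • θ := by fun_prop
  refine fun x hx => sub_eq_zero.1 ((h₁.sub hU h₂).eqOn_zero_openRay hκ hU hK hθ hray hs₀ ?_ hx)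
  filter_upwards [lt_mem_nhds hs₀, (hV.preimage hline).mem_nhds hmem] with s hs hsV
  rw [Pi.sub_apply, Complex.sub_im, him _ ⟨hsV, add_smul_mem_openRay p θ hs⟩, sub_self]

theorem im_determines_radiation_solution_on_two_rays
    (κ : ℝ) (hκ : 0 < κ)
    (U : Set R2) (hUopen : IsOpen U) (hUconn : IsConnected U) (hKcpt : IsCompact Uᶜ)
    (θ x₁ x₂ : R2) (hθ : ‖θ‖ = 1) (t : ℝ) (hline : x₂ = x₁ + t • θ)
    (Lp Lm : Set R2)
    (hLp : Lp = {x : R2 | ∃ s : ℝ, 0 < s ∧ x = x₁ + s • θ})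
    (hLm : Lm = {x : R2 | ∃ s : ℝ, 0 < s ∧ x = x₂ - s • θ})
    (hLpU : Lp ⊆ U) (hLmU : Lm ⊆ U)
    (Λp Λm : Set R2) (hΛpne : Λp.Nonempty) (hΛmne : Λm.Nonempty)
    (hΛpopen : ∃ V : Set R2, IsOpen V ∧ Λp = V ∩ Lp)
    (hΛmopen : ∃ V : Set R2, IsOpen V ∧ Λm = V ∩ Lm)
    (ψ₁ ψ₂ : R2 → ℂ)
    (h₁ : IsRadiationSolution κ U ψ₁) (h₂ : IsRadiationSolution κ U ψ₂)
    (him : ∀ x ∈ Λp ∪ Λm, (ψ₁ x).im = (ψ₂ x).im) :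
    ∀ x ∈ Lp ∪ Lm, ψ₁ x = ψ₂ x := by
  obtain ⟨V, hV, rfl⟩ := hΛpopen
  obtain ⟨W, hW, rfl⟩ := hΛmopen
  rw [← openRay_neg] at hLm
  subst hLp hLm
  rintro x (hx | hx)
  · exact im_determines_radiation_solution_on_two_rays_general hκ hUopen hKcpt.isBounded h₁ h₂ hθ
      hLpU hV hΛpne (fun y hy => him y (Or.inl hy)) hx
  · exact im_determines_radiation_solution_on_two_rays_general hκ hUopen hKcpt.isBounded h₁ h₂
      (norm_neg θ ▸ hθ) hLmU hW hΛmne (fun y hy => him y (Or.inr hy)) hx
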